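/- arXiv:1902.03734 — 7 statements merged into one kernel-verified Lean document; each statement's English description precedes it below -/
import Mathlib

section
/- Let f(x) ∈ ℤ[x] be monic of degree m such that at least one complex root of f is not an integer (equivalently, f is not a product of m monic linear polynomials with integer coefficients), and let q_1, q_2, ..., q_m ∈ ℤ. Then the equation (y + q_1)(y + q_2)···(y + q_m) = f(x) has only finitely many solutions (x, y) in integers. -/
open Polynomial

/-!
Let `f` and `g` be integer polynomials of the same degree `n` whose leading coefficients agree up to
sign. If `f(x) = g(y)`, then `|x|ⁿ - |y|ⁿ = O(max(|x|, |y|)ⁿ⁻¹)`, so `||x| - |y||` is bounded and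
every integer solution lies on one of finitely many lines `y = ±x + k`. A line carrying infinitely
many solutions forces the polynomial identity `f = g(±X + k)`; for `g = ∏ (X + qᵢ)` this makes every
complex root of `f` an integer.
-/

section OrderedRing

variable {R : Type*} [CommRing R] [LinearOrder R] [IsStrictOrderedRing R]

lemma abs_eval_le_sum_abs_coeff_mul_pow {p : R[X]} {n : ℕ} (hn : p.natDegree ≤ n) {x M : R}
    (hM : 1 ≤ M) (hx : |x| ≤ M) : |p.eval x| ≤ (p.sum fun _ a => |a|) * M ^ n := by
  rw [eval_eq_sum, sum_def, sum_def, Finset.sum_mul]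
  refine (Finset.abs_sum_le_sum_abs _ _).trans (Finset.sum_le_sum fun i hi => ?_)
  have hin : i ≤ n := (le_natDegree_of_mem_supp i hi).trans hn
  calc |p.coeff i * x ^ i| = |p.coeff i| * |x| ^ i := by rw [abs_mul, abs_pow]
    _ ≤ |p.coeff i| * M ^ i := by gcongr
    _ ≤ |p.coeff i| * M ^ n := by gcongr

lemma sub_le_of_pow_succ_sub_pow_succ_le {a b B : R} {n : ℕ} (hb : 0 ≤ b) (hba : b ≤ a)
    (ha : 0 < a) (h : a ^ (n + 1) - b ^ (n + 1) ≤ B * a ^ n) : a - b ≤ B := by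
  refine le_of_mul_le_mul_right ?_ (pow_pos ha n)
  calc (a - b) * a ^ n = a ^ (n + 1) - b * a ^ n := by ring
    _ ≤ a ^ (n + 1) - b * b ^ n := by gcongr
    _ = a ^ (n + 1) - b ^ (n + 1) := by ring
    _ ≤ B * a ^ n := h

lemma abs_leadingCoeff_mul_pow_sub_pow_le {f g : R[X]} (hdeg : f.natDegree = g.natDegree)
    (hlead : |f.leadingCoeff| = |g.leadingCoeff|) {x y : R} (hxy : f.eval x = g.eval y) :
    |f.leadingCoeff| * (|x| ^ f.natDegree - |y| ^ f.natDegree) ≤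
      |f.eraseLead.eval x| + |g.eraseLead.eval y| := by
  have hf : f.eraseLead.eval x + f.leadingCoeff * x ^ f.natDegree = f.eval x := by
    simpa only [eval_add, eval_mul, eval_C, eval_pow, eval_X] using
      congrArg (eval x) f.eraseLead_add_C_mul_X_pow
  have hg : g.eraseLead.eval y + g.leadingCoeff * y ^ g.natDegree = g.eval y := by
    simpa only [eval_add, eval_mul, eval_C, eval_pow, eval_X] using
      congrArg (eval y) g.eraseLead_add_C_mul_X_pow
  calc |f.leadingCoeff| * (|x| ^ f.natDegree - |y| ^ f.natDegree)
      = |f.leadingCoeff * x ^ f.natDegree| - |g.leadingCoeff * y ^ g.natDegree| := by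
        rw [abs_mul, abs_mul, abs_pow, abs_pow, ← hlead, ← hdeg, mul_sub]
    _ ≤ |f.leadingCoeff * x ^ f.natDegree - g.leadingCoeff * y ^ g.natDegree| :=
        abs_sub_abs_le_abs_sub _ _
    _ = |g.eraseLead.eval y - f.eraseLead.eval x| := by
        congr 1
        linear_combination hf - hg + hxy
    _ ≤ |f.eraseLead.eval x| + |g.eraseLead.eval y| := by
        rw [add_comm]
        exact abs_sub _ _

end OrderedRing

lemma exists_abs_sub_abs_le_of_eval_eq_eval {f g : ℤ[X]} (hf : f.natDegree ≠ 0)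
    (hdeg : f.natDegree = g.natDegree) (hlead : |f.leadingCoeff| = |g.leadingCoeff|) :
    ∃ B : ℤ, ∀ x y, f.eval x = g.eval y → |x| - |y| ≤ B := by
  obtain ⟨n, hn⟩ := Nat.exists_eq_succ_of_ne_zero hf
  have hlead_pos : 1 ≤ |f.leadingCoeff| :=
    Int.one_le_abs (leadingCoeff_ne_zero.2 (ne_zero_of_natDegree_gt (Nat.pos_of_ne_zero hf)))
  let S (p : ℤ[X]) : ℤ := p.eraseLead.sum fun _ a => |a|
  have hS (p : ℤ[X]) : 0 ≤ S p := Finset.sum_nonneg fun _ _ => abs_nonneg _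
  refine ⟨S f + S g, fun x y hxy => ?_⟩
  rcases le_or_gt |x| |y| with hle | hlt
  · linarith [hS f, hS g]
  have hx : 1 ≤ |x| := (abs_nonneg y).trans_lt hlt
  have hdegree {p : ℤ[X]} (hp : p.natDegree = n + 1) : p.eraseLead.natDegree ≤ n :=
    p.eraseLead_natDegree_le.trans (by rw [hp, Nat.add_sub_cancel])
  refine sub_le_of_pow_succ_sub_pow_succ_le (n := n) (abs_nonneg y) hlt.le (by linarith) ?_
  have hpow : 0 ≤ |x| ^ (n + 1) - |y| ^ (n + 1) := sub_nonneg.2 (by gcongr)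
  calc |x| ^ (n + 1) - |y| ^ (n + 1)
      ≤ |f.leadingCoeff| * (|x| ^ (n + 1) - |y| ^ (n + 1)) :=
        le_mul_of_one_le_left hpow hlead_pos
    _ ≤ |f.eraseLead.eval x| + |g.eraseLead.eval y| := by
        simpa only [hn] using abs_leadingCoeff_mul_pow_sub_pow_le hdeg hlead hxy
    _ ≤ S f * |x| ^ n + S g * |x| ^ n :=
        add_le_add (abs_eval_le_sum_abs_coeff_mul_pow (hdegree hn) hx le_rfl)
          (abs_eval_le_sum_abs_coeff_mul_pow (hdegree (hdeg ▸ hn)) hx hlt.le)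
    _ = (S f + S g) * |x| ^ n := by ring

lemma exists_units_abs_sub_mul_le {x y B : ℤ} (h : |(|x| - |y|)| ≤ B) :
    ∃ ε : ℤˣ, |y - ε * x| ≤ B := by
  have hsub : |y - x| ≤ B ∨ |y + x| ≤ B := by
    simp only [abs_le] at h ⊢
    grind
  rcases hsub with hsub | hadd
  · exact ⟨1, by simpa using hsub⟩
  · exact ⟨-1, by simpa using hadd⟩

lemma exists_units_abs_sub_mul_le_of_eval_eq_eval {f g : ℤ[X]} (hf : f.natDegree ≠ 0)
    (hdeg : f.natDegree = g.natDegree) (hlead : |f.leadingCoeff| = |g.leadingCoeff|) :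
    ∃ B : ℤ, ∀ x y, f.eval x = g.eval y → ∃ ε : ℤˣ, |y - ε * x| ≤ B := by
  obtain ⟨B₁, hB₁⟩ := exists_abs_sub_abs_le_of_eval_eq_eval hf hdeg hlead
  obtain ⟨B₂, hB₂⟩ := exists_abs_sub_abs_le_of_eval_eq_eval (hdeg ▸ hf) hdeg.symm hlead.symm
  refine ⟨max B₁ B₂, fun x y hxy => exists_units_abs_sub_mul_le (abs_sub_le_iff.2 ⟨?_, ?_⟩)⟩
  · exact (hB₁ x y hxy).trans (le_max_left _ _)
  · exact (hB₂ y x hxy.symm).trans (le_max_right _ _)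

lemma finite_setOf_eval_eq_eval_mul_add {R : Type*} [CommRing R] [IsDomain R] {f g : R[X]} {a b : R}
    (hne : g.comp (C a * X + C b) ≠ f) : {x | g.eval (a * x + b) = f.eval x}.Finite := by
  contrapose! hne
  exact eq_of_infinite_eval_eq _ _ (by simpa [eval_comp] using hne)

section ProdXAddC

variable {ι R : Type*} [CommRing R]

lemma monic_prod_X_add_C (s : Finset ι) (q : ι → R) : (∏ i ∈ s, (X + C (q i))).Monic :=
  monic_prod_of_monic _ _ fun i _ => monic_X_add_C (q i)

lemma natDegree_prod_X_add_C [Nontrivial R] (s : Finset ι) (q : ι → R) :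
    (∏ i ∈ s, (X + C (q i))).natDegree = s.card := by
  rw [natDegree_prod_of_monic _ _ fun i _ => monic_X_add_C (q i)]
  simp only [natDegree_X_add_C, Finset.sum_const, smul_eq_mul, mul_one]

lemma exists_intCast_eq_of_aeval_prod_X_add_C_comp_eq_zero [IsDomain R] (s : Finset ι)
    (q : ι → ℤ) (ε : ℤˣ) (k : ℤ) {z : R}
    (hz : aeval z ((∏ i ∈ s, (X + C (q i))).comp (C (ε : ℤ) * X + C k)) = 0) :
    ∃ j : ℤ, z = j := by
  simp only [aeval_comp, map_prod, Finset.prod_eq_zero_iff] at hz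
  obtain ⟨i, -, hi⟩ := hz
  have hlin : (ε : ℤ) * z + k + q i = 0 := by simpa using hi
  have hε : ((ε : ℤ) : R) * (ε : ℤ) = 1 := by
    exact_mod_cast congrArg (Int.cast (R := R)) (Int.units_coe_mul_self ε)
  refine ⟨-ε * (k + q i), ?_⟩
  push_cast
  linear_combination (ε : ℤ) * hlin - z * hε

lemma prod_X_add_C_comp_ne_of_exists_root_ne_intCast [IsDomain R] {f : ℤ[X]}
    (hroot : ∃ z : R, aeval z f = 0 ∧ ∀ k : ℤ, z ≠ k) (s : Finset ι) (q : ι → ℤ) (ε : ℤˣ) (k : ℤ) :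
    (∏ i ∈ s, (X + C (q i))).comp (C (ε : ℤ) * X + C k) ≠ f := by
  rintro rfl
  obtain ⟨z, hz, hz_int⟩ := hroot
  obtain ⟨j, hj⟩ := exists_intCast_eq_of_aeval_prod_X_add_C_comp_eq_zero s q ε k hz
  exact hz_int j hj

end ProdXAddC

theorem stmt1_general {f g : ℤ[X]} (hdeg : f.natDegree = g.natDegree)
    (hlead : |f.leadingCoeff| = |g.leadingCoeff|)
    (hne : ∀ (ε : ℤˣ) (k : ℤ), g.comp (C (ε : ℤ) * X + C k) ≠ f) :
    {p : ℤ × ℤ | g.eval p.2 = f.eval p.1}.Finite := by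
  rcases eq_or_ne f.natDegree 0 with hf | hf
  · obtain ⟨a, rfl⟩ := natDegree_eq_zero.1 hf
    obtain ⟨b, rfl⟩ := natDegree_eq_zero.1 (hdeg ▸ hf)
    have hba : b ≠ a := fun h => hne 1 0 (by rw [h, C_comp])
    simp [hba]
  obtain ⟨B, hB⟩ := exists_units_abs_sub_mul_le_of_eval_eq_eval hf hdeg hlead
  have hlines : (⋃ ε : ℤˣ, ⋃ k ∈ Set.Icc (-B) B,
      (fun x : ℤ => (x, ε * x + k)) '' {x | g.eval (ε * x + k) = f.eval x}).Finite :=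
    Set.finite_iUnion fun ε => (Set.finite_Icc (-B) B).biUnion fun k _ =>
      (finite_setOf_eval_eq_eval_mul_add (hne ε k)).image _
  refine hlines.subset ?_
  rintro ⟨x, y⟩ (hxy : g.eval y = f.eval x)
  obtain ⟨ε, hε⟩ := hB x y hxy.symm
  have hy : ε * x + (y - ε * x) = y := by ring
  simp only [Set.mem_iUnion]
  exact ⟨ε, y - ε * x, abs_le.1 hε, x, (congrArg (eval · g) hy).trans hxy, congrArg (Prod.mk x) hy⟩

theorem stmt1 (m : ℕ) (f : Polynomial ℤ) (hf : f.Monic) (hdeg : f.natDegree = m)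
    (hroot : ∃ z : ℂ, Polynomial.aeval z f = 0 ∧ ∀ k : ℤ, z ≠ (k : ℂ))
    (q : Fin m → ℤ) :
    {p : ℤ × ℤ | (∏ i, (p.2 + q i)) = f.eval p.1}.Finite := by
  simpa only [eval_prod, eval_add, eval_X, eval_C] using
    stmt1_general (by rw [hdeg, natDegree_prod_X_add_C, Finset.card_fin])
      (by rw [hf.leadingCoeff, (monic_prod_X_add_C _ q).leadingCoeff])
      (prod_X_add_C_comp_ne_of_exists_root_ne_intCast hroot Finset.univ q)
end

section
/- Assume the ABC-Conjecture. Let f_{11}, ..., f_{1l}, f_{21}, ..., f_{2m}, g_1, ..., g_n ∈ ℤ[x] and let α_1, ..., α_l, β_1, ..., β_m, γ_1, ..., γ_n be positive integers. Set f(x) = f_{11}(x)^{α_1}···f_{1l}(x)^{α_l} + f_{21}(x)^{β_1}···f_{2m}(x)^{β_m} (or with a minus sign in place of the plus sign) and g(y) = g_1(y)^{γ_1}···g_n(y)^{γ_n}. Suppose (1) deg g < deg f; (2) deg g > 1 + deg(f_{11}·f_{12}···f_{1l}·f_{21}···f_{2m}·g_1···g_n); (3) the polynomials f_{11}·f_{12}···f_{1l}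 and f_{21}···f_{2m} have no non-constant common factor in ℤ[x]; (4) the leading coefficient of each of f_{11}···f_{1l}, f_{21}···f_{2m}, and g_1···g_n is positive. Then the equation f(x) = g(y) has only finitely many solutions (x, y) in integers. -/
open Polynomial

/-- The ABC-Conjecture: for every `ε > 0` there is a constant `C` such that for all
coprime positive integers `a`, `b`, `c` with `a + b = c`, we have
`c ≤ C * rad (a * b * c) ^ (1 + ε)`, where `rad n` is the product of the distinct
prime divisors of `n`. -/
def ABCConjecture : Prop :=
  ∀ ε : ℝ, 0 < ε → ∃ C : ℝ, ∀ a b c : ℕ, 0 < a → 0 < b → 0 < c →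
    Nat.Coprime a b → a + b = c →
    (c : ℝ) ≤ C * ((∏ p ∈ (a * b * c).primeFactors, p : ℕ) : ℝ) ^ (1 + ε)

/-!
Let `F₁ * F₂` divide a power of `R` and `G` a power of `Q`, write `f = F₁ + F₂`, and let `(x, y)` be
a solution of `f(x) = G(y)` of height `H = |f(x)|`. Up to constants, `|R(x)| ≤ H ^ (deg R / deg f)`
and `|Q(y)| ≤ H ^ (deg Q / deg G)`. If `F₁` and `F₂` are coprime over `ℚ`, then `gcd (F₁(x), F₂(x))`
is bounded, so the ABC conjecture applies to `F₁(x) + F₂(x) = G(y)` and bounds `H` by a constant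
times `|R(x) * Q(y)| ^ (1 + ε)`. Hence `H` is bounded as soon as
`deg R / deg f + deg Q / deg G < 1`.

Real exponents are avoided by taking `ε = 1 / t` with `t = deg f * deg G` and raising the
inequalities to suitable powers.
-/

section Divisibility

variable {M : Type*} [CommMonoid M]

theorem mul_dvd_mul_pow_add {a b r s : M} {j k : ℕ} (ha : a ∣ r ^ j) (hb : b ∣ s ^ k) :
    a * b ∣ (r * s) ^ (j + k) := by
  rw [mul_pow]
  exact mul_dvd_mul (ha.trans (pow_dvd_pow r (Nat.le_add_right j k)))
    (hb.trans (pow_dvd_pow s (Nat.le_add_left k j)))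

theorem prod_pow_dvd_prod_pow_sum {ι : Type*} (s : Finset ι) (f : ι → M) (e : ι → ℕ) :
    ∏ i ∈ s, f i ^ e i ∣ (∏ i ∈ s, f i) ^ ∑ i ∈ s, e i := by
  rw [← Finset.prod_pow]
  exact Finset.prod_dvd_prod_of_dvd _ _ fun i hi ↦
    pow_dvd_pow (f i) (Finset.single_le_sum_of_canonicallyOrdered hi)

end Divisibility

section FractionField

open IsLocalization nonZeroDivisors

variable {R : Type*} [CommRing R] [IsDomain R] (K : Type*) [Field K] [Algebra R K]
  [IsFractionRing R K]

theorem primPart_integerNormalization_dvd [NormalizedGCDMonoid R] {p : R[X]} {z : K[X]}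
    (h : z ∣ p.map (algebraMap R K)) : (integerNormalization R⁰ z).primPart ∣ p := by
  obtain ⟨b, hb, hbz⟩ := integerNormalization_spec R⁰ z
  refine (isPrimitive_primPart _).dvd_of_fraction_map_dvd_fraction_map (K := K) ?_
  refine (Polynomial.map_dvd _ (primPart_dvd _)).trans ?_
  have hunit : IsUnit (C (algebraMap R K b)) :=
    isUnit_C.2 (IsLocalization.map_units K (⟨b, hb⟩ : R⁰))
  rw [hbz, algebra_compatible_smul K b z, smul_eq_C_mul]
  exact hunit.mul_left_dvd.2 h

theorem isCoprime_map_of_natDegree_common_divisor_eq_zero [NormalizedGCDMonoid R] {A B : R[X]}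
    (h : ∀ d, d ∣ A → d ∣ B → d.natDegree = 0) :
    IsCoprime (A.map (algebraMap R K)) (B.map (algebraMap R K)) := by
  have hinj : Function.Injective (algebraMap R K) := IsFractionRing.injective R K
  rw [← isRelPrime_iff_isCoprime]
  intro z hzA hzB
  have hz : z ≠ 0 := by
    rintro rfl
    rw [zero_dvd_iff, Polynomial.map_eq_zero_iff hinj] at hzA hzB
    simpa using h X (hzA ▸ dvd_zero X) (hzB ▸ dvd_zero X)
  obtain ⟨b, hb, hbz⟩ := integerNormalization_spec R⁰ z
  have hdeg := h _ (primPart_integerNormalization_dvd K hzA)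
    (primPart_integerNormalization_dvd K hzB)
  rw [natDegree_primPart, ← natDegree_map_eq_of_injective hinj, hbz,
    natDegree_smul z (nonZeroDivisors.ne_zero hb)] at hdeg
  exact isUnit_iff_degree_eq_zero.2 (by rw [degree_eq_natDegree hz, hdeg, Nat.cast_zero])

theorem exists_mul_add_mul_eq_C_of_isCoprime_map {A B : R[X]}
    (h : IsCoprime (A.map (algebraMap R K)) (B.map (algebraMap R K))) :
    ∃ U V : R[X], ∃ d : R, d ≠ 0 ∧ U * A + V * B = C d := by
  have hinj : Function.Injective (algebraMap R K) := IsFractionRing.injective R K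
  obtain ⟨u, v, huv⟩ := h
  obtain ⟨b, hb, hbu⟩ := integerNormalization_spec R⁰ u
  obtain ⟨c, hc, hcv⟩ := integerNormalization_spec R⁰ v
  refine ⟨C c * integerNormalization R⁰ u, C b * integerNormalization R⁰ v, b * c,
    mul_ne_zero (nonZeroDivisors.ne_zero hb) (nonZeroDivisors.ne_zero hc),
    map_injective _ hinj ?_⟩
  simp only [Polynomial.map_add, Polynomial.map_mul, map_C, hbu, hcv,
    algebra_compatible_smul K b u, algebra_compatible_smul K c v, smul_eq_C_mul, map_mul]
  linear_combination C (algebraMap R K b) * C (algebraMap R K c) * huv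

end FractionField

section Evaluation

theorem exists_gcd_eval_le {A B : ℤ[X]}
    (h : IsCoprime (A.map (algebraMap ℤ ℚ)) (B.map (algebraMap ℤ ℚ))) :
    ∃ D : ℕ, ∀ x : ℤ, Int.gcd (A.eval x) (B.eval x) ≤ D := by
  obtain ⟨U, V, d, hd, hUV⟩ := exists_mul_add_mul_eq_C_of_isCoprime_map ℚ h
  refine ⟨d.natAbs, fun x ↦ Nat.le_of_dvd (Int.natAbs_pos.2 hd) (Int.natCast_dvd.1 ?_)⟩
  have hx : U.eval x * A.eval x + V.eval x * B.eval x = d := by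
    simpa only [eval_add, eval_mul, eval_C] using congrArg (eval x) hUV
  rw [← hx]
  exact dvd_add ((Int.gcd_dvd_left ..).mul_left _) ((Int.gcd_dvd_right ..).mul_left _)

theorem finite_preimage_eval {R : Type*} [CommRing R] [IsDomain R] {P : R[X]}
    (hP : P.natDegree ≠ 0) {V : Set R} (hV : V.Finite) : ((P.eval ·) ⁻¹' V).Finite := by
  refine hV.preimage' fun v _ ↦ ?_
  have hne : P - C v ≠ 0 := fun h ↦ hP (by rw [sub_eq_zero.1 h, natDegree_C])
  refine (finite_setOfPred_isRoot hne).subset fun x hx ↦ ?_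
  have hx : P.eval x = v := hx
  simp [hx]

theorem exists_natAbs_eval_le_mul_of_degree_le {P Q : ℤ[X]} (h : P.degree ≤ Q.degree) :
    ∃ K : ℕ, ∀ x : ℤ, Q.eval x ≠ 0 → (P.eval x).natAbs ≤ K * (Q.eval x).natAbs := by
  have hO := isBigO_cobounded_of_degree_le h
  rw [IsOrderBornology.cobounded_eq, ← Int.cofinite_eq] at hO
  obtain ⟨C, -, hC⟩ := Asymptotics.bound_of_isBigO_cofinite hO
  refine ⟨⌈C⌉₊, fun x hx ↦ ?_⟩
  have hnorm (z : ℤ) : ‖z‖ = (z.natAbs : ℝ) := by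
    rw [Int.norm_eq_abs, Nat.cast_natAbs, Int.cast_abs]
  have hreal : ((P.eval x).natAbs : ℝ) ≤ ⌈C⌉₊ * (Q.eval x).natAbs := by
    rw [← hnorm, ← hnorm]
    exact (hC hx).trans (by gcongr; exact Nat.le_ceil C)
  exact_mod_cast hreal

theorem exists_natAbs_eval_pow_natDegree_le (P : ℤ[X]) {f : ℤ[X]} (hf : f ≠ 0) :
    ∃ K : ℕ, ∀ x : ℤ, f.eval x ≠ 0 →
      (P.eval x).natAbs ^ f.natDegree ≤ K * (f.eval x).natAbs ^ P.natDegree := by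
  have hdeg : (P ^ f.natDegree).degree ≤ (f ^ P.natDegree).degree := by
    rw [degree_eq_natDegree (pow_ne_zero _ hf)]
    refine degree_le_of_natDegree_le ?_
    rw [natDegree_pow, natDegree_pow, mul_comm]
  obtain ⟨K, hK⟩ := exists_natAbs_eval_le_mul_of_degree_le hdeg
  refine ⟨K, fun x hx ↦ ?_⟩
  have hfx : (f ^ P.natDegree).eval x ≠ 0 := by
    rw [eval_pow]
    exact pow_ne_zero _ hx
  simpa only [eval_pow, Int.natAbs_pow] using hK x hfx

theorem exists_natAbs_eval_mul_eval_pow_le (R Q : ℤ[X]) {f G : ℤ[X]} (hf : f ≠ 0) (hG : G ≠ 0) :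
    ∃ K : ℕ, ∀ x y : ℤ, f.eval x = G.eval y → G.eval y ≠ 0 →
      (R.eval x * Q.eval y).natAbs ^ (f.natDegree * G.natDegree) ≤
        K * (G.eval y).natAbs ^ (R.natDegree * G.natDegree + Q.natDegree * f.natDegree) := by
  obtain ⟨A, hA⟩ := exists_natAbs_eval_pow_natDegree_le R hf
  obtain ⟨B, hB⟩ := exists_natAbs_eval_pow_natDegree_le Q hG
  set d := f.natDegree
  set e := G.natDegree
  refine ⟨A ^ e * B ^ d, fun x y hxy hy ↦ ?_⟩
  have hRx : (R.eval x).natAbs ^ d ≤ A * (G.eval y).natAbs ^ R.natDegree :=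
    hxy ▸ hA x (hxy ▸ hy)
  calc (R.eval x * Q.eval y).natAbs ^ (d * e)
      = ((R.eval x).natAbs ^ d) ^ e * ((Q.eval y).natAbs ^ e) ^ d := by
        rw [Int.natAbs_mul]
        ring
    _ ≤ (A * (G.eval y).natAbs ^ R.natDegree) ^ e * (B * (G.eval y).natAbs ^ Q.natDegree) ^ d := by
        gcongr
        exact hB y hy
    _ = A ^ e * B ^ d * (G.eval y).natAbs ^ (R.natDegree * e + Q.natDegree * d) := by ring

end Evaluation

namespace ABCConjecture

open UniqueFactorizationMonoid (radical exists_dvd_pow_iff_radical_dvd)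

theorem exists_pow_le_radical_pow_succ (abc : ABCConjecture) {t : ℕ} (ht : t ≠ 0) :
    ∃ K : ℕ, ∀ a b c : ℕ, a ≠ 0 → b ≠ 0 → c ≠ 0 → Nat.Coprime a b → a + b = c →
      c ^ t ≤ K * radical (a * b * c) ^ (t + 1) := by
  obtain ⟨C, hC⟩ := abc (1 / t) (by positivity)
  refine ⟨⌈C⌉₊ ^ t, fun a b c ha hb hc hab habc ↦ ?_⟩
  set ρ := radical (a * b * c) with hρ
  have hc' : (c : ℝ) ≤ ⌈C⌉₊ * (ρ : ℝ) ^ (1 + 1 / (t : ℝ)) := by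
    rw [hρ, Nat.radical_eq_prod_primeFactors]
    refine (hC a b c ha.bot_lt hb.bot_lt hc.bot_lt hab habc).trans ?_
    gcongr
    exact Nat.le_ceil C
  have hpow : ((ρ : ℝ) ^ (1 + 1 / (t : ℝ))) ^ t = (ρ : ℝ) ^ (t + 1) := by
    rw [← Real.rpow_mul_natCast (Nat.cast_nonneg ρ), ← Real.rpow_natCast]
    congr 1
    push_cast
    field_simp
  have hreal : (c : ℝ) ^ t ≤ ⌈C⌉₊ ^ t * (ρ : ℝ) ^ (t + 1) := by
    rw [← hpow, ← mul_pow]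
    gcongr
  exact_mod_cast hreal

theorem exists_natAbs_pow_le_radical_pow_succ (abc : ABCConjecture) {t : ℕ} (ht : t ≠ 0) :
    ∃ K : ℕ, ∀ a b c : ℤ, a ≠ 0 → b ≠ 0 → c ≠ 0 → IsCoprime a b → a + b = c →
      c.natAbs ^ t ≤ K * (radical (a * b * c)).natAbs ^ (t + 1) := by
  obtain ⟨K, hK⟩ := abc.exists_pow_le_radical_pow_succ ht
  refine ⟨K, fun a b c ha hb hc hab habc ↦ ?_⟩
  have of_triple {u v w : ℤ} (hu : u ≠ 0) (hv : v ≠ 0) (hw : w ≠ 0) (huv : IsCoprime u v)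
      (hsum : u.natAbs + v.natAbs = w.natAbs) (hprod : u * v * w = a * b * c)
      (hcw : c.natAbs ≤ w.natAbs) :
      c.natAbs ^ t ≤ K * (radical (a * b * c)).natAbs ^ (t + 1) := by
    have h := hK _ _ _ (Int.natAbs_ne_zero.2 hu) (Int.natAbs_ne_zero.2 hv)
      (Int.natAbs_ne_zero.2 hw) (Int.isCoprime_iff_nat_coprime.1 huv) hsum
    rw [← Int.natAbs_mul, ← Int.natAbs_mul, hprod, ← Int.natAbs_natCast (radical _),
      Int.radical_natAbs_eq_radical] at h
    exact (Nat.pow_le_pow_left hcw t).trans h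
  have hcb : IsCoprime c b := by
    simpa [← habc] using (IsCoprime.add_mul_right_left_iff (z := 1)).2 hab
  have hca : IsCoprime c a := by
    simpa [← habc] using (IsCoprime.mul_add_right_left_iff (z := 1)).2 hab.symm
  -- the summand of largest absolute value, up to signs, is the sum of the other two
  have htri : a.natAbs + b.natAbs = c.natAbs ∨ c.natAbs + b.natAbs = a.natAbs ∨
      c.natAbs + a.natAbs = b.natAbs := by omega
  rcases htri with h | h | h
  · exact of_triple ha hb hc hab h rfl le_rfl
  · exact of_triple hc hb ha hcb h (by ring) (by omega)
  · exact of_triple hc ha hb hca h (by ring) (by omega)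

theorem exists_natAbs_pow_le_of_gcd_le (abc : ABCConjecture) {t : ℕ} (ht : t ≠ 0) (D : ℕ) :
    ∃ K : ℕ, ∀ (a b c r : ℤ) (k : ℕ), r ≠ 0 → a * b * c ∣ r ^ k → Int.gcd a b ≤ D → a + b = c →
      c.natAbs ^ t ≤ K * r.natAbs ^ (t + 1) := by
  obtain ⟨K, hK⟩ := abc.exists_natAbs_pow_le_radical_pow_succ ht
  refine ⟨D ^ t * K, fun a b c r k hr hdvd hD habc ↦ ?_⟩
  have habc0 : a * b * c ≠ 0 := ne_zero_of_dvd_ne_zero (pow_ne_zero k hr) hdvd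
  have ha0 : a ≠ 0 := left_ne_zero_of_mul (left_ne_zero_of_mul habc0)
  obtain ⟨g, a', b', -, hcop, rfl, rfl⟩ :=
    Int.exists_gcd_one' (Int.gcd_pos_of_ne_zero_left b ha0)
  obtain rfl : (a' + b') * g = c := by rw [← habc, add_mul]
  have hgD : g ≤ D := by simpa [Int.gcd_mul_right, hcop] using hD
  have hdvd' : a' * b' * (a' + b') ∣ r ^ k := Dvd.dvd.trans ⟨(g : ℤ) ^ 3, by ring⟩ hdvd
  have hne : a' * b' * (a' + b') ≠ 0 := ne_zero_of_dvd_ne_zero (pow_ne_zero k hr) hdvd'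
  have hrad : (radical (a' * b' * (a' + b'))).natAbs ≤ r.natAbs :=
    Int.natAbs_le_of_dvd_ne_zero ((exists_dvd_pow_iff_radical_dvd hne).1 ⟨k, hdvd'⟩) hr
  have hsum := hK a' b' (a' + b') (left_ne_zero_of_mul (left_ne_zero_of_mul hne))
    (right_ne_zero_of_mul (left_ne_zero_of_mul hne)) (right_ne_zero_of_mul hne)
    (Int.isCoprime_iff_gcd_eq_one.2 hcop) rfl
  calc ((a' + b') * g).natAbs ^ t = g ^ t * (a' + b').natAbs ^ t := by
        rw [Int.natAbs_mul, Int.natAbs_natCast, mul_pow, mul_comm]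
    _ ≤ D ^ t * (K * (radical (a' * b' * (a' + b'))).natAbs ^ (t + 1)) := by gcongr
    _ ≤ D ^ t * (K * r.natAbs ^ (t + 1)) := by gcongr
    _ = D ^ t * K * r.natAbs ^ (t + 1) := (mul_assoc _ _ _).symm

end ABCConjecture

theorem le_of_pow_le_mul_pow_succ {H ρ A B s t : ℕ} (hst : s < t)
    (hH : H ^ t ≤ A * ρ ^ (t + 1)) (hρ : ρ ^ t ≤ B * H ^ s) :
    H ≤ A ^ t * B ^ (t + 1) := by
  rcases H.eq_zero_or_pos with rfl | hpos
  · exact Nat.zero_le _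
  have hexp : s * (t + 1) + 1 ≤ t * t := by nlinarith
  refine Nat.le_of_mul_le_mul_left ?_ (pow_pos hpos (s * (t + 1)))
  calc H ^ (s * (t + 1)) * H = H ^ (s * (t + 1) + 1) := (pow_succ _ _).symm
    _ ≤ H ^ (t * t) := Nat.pow_le_pow_right hpos hexp
    _ = (H ^ t) ^ t := pow_mul _ _ _
    _ ≤ (A * ρ ^ (t + 1)) ^ t := by gcongr
    _ = A ^ t * (ρ ^ t) ^ (t + 1) := by ring
    _ ≤ A ^ t * (B * H ^ s) ^ (t + 1) := by gcongr
    _ = H ^ (s * (t + 1)) * (A ^ t * B ^ (t + 1)) := by ring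

namespace ABCConjecture

variable {F₁ F₂ f G R Q : ℤ[X]} {j k : ℕ}

theorem exists_natAbs_eval_le (abc : ABCConjecture) (hf : f = F₁ + F₂)
    (hcop : IsCoprime (F₁.map (algebraMap ℤ ℚ)) (F₂.map (algebraMap ℤ ℚ)))
    (hR : F₁ * F₂ ∣ R ^ j) (hQ : G ∣ Q ^ k)
    (hdeg : R.natDegree * G.natDegree + Q.natDegree * f.natDegree < f.natDegree * G.natDegree) :
    ∃ H : ℕ, ∀ x y : ℤ, f.eval x = G.eval y → R.eval x ≠ 0 → Q.eval y ≠ 0 →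
      (G.eval y).natAbs ≤ H := by
  have ht : f.natDegree * G.natDegree ≠ 0 := hdeg.ne_bot
  have hf₀ : f ≠ 0 := ne_zero_of_natDegree_gt (left_ne_zero_of_mul ht).bot_lt
  have hG₀ : G ≠ 0 := ne_zero_of_natDegree_gt (right_ne_zero_of_mul ht).bot_lt
  obtain ⟨D, hD⟩ := exists_gcd_eval_le hcop
  obtain ⟨A, hA⟩ := abc.exists_natAbs_pow_le_of_gcd_le ht D
  obtain ⟨B, hB⟩ := exists_natAbs_eval_mul_eval_pow_le R Q hf₀ hG₀
  refine ⟨A ^ (f.natDegree * G.natDegree) * B ^ (f.natDegree * G.natDegree + 1),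
    fun x y hxy hRx hQy ↦ ?_⟩
  have hRdvd : F₁.eval x * F₂.eval x ∣ R.eval x ^ j := by simpa using eval_dvd (x := x) hR
  have hQdvd : G.eval y ∣ Q.eval y ^ k := by simpa using eval_dvd (x := y) hQ
  have hsum : F₁.eval x + F₂.eval x = G.eval y := by rw [← hxy, hf, eval_add]
  exact le_of_pow_le_mul_pow_succ hdeg
    (hA _ _ _ _ _ (mul_ne_zero hRx hQy) (mul_dvd_mul_pow_add hRdvd hQdvd) (hD x) hsum)
    (hB x y hxy (ne_zero_of_dvd_ne_zero (pow_ne_zero k hQy) hQdvd))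

theorem finite_setOf_eval_eq_eval (abc : ABCConjecture) (hf : f = F₁ + F₂)
    (hcop : IsCoprime (F₁.map (algebraMap ℤ ℚ)) (F₂.map (algebraMap ℤ ℚ)))
    (hR₀ : R ≠ 0) (hQ₀ : Q ≠ 0) (hR : F₁ * F₂ ∣ R ^ j) (hQ : G ∣ Q ^ k)
    (hdeg : R.natDegree * G.natDegree + Q.natDegree * f.natDegree < f.natDegree * G.natDegree) :
    {p : ℤ × ℤ | f.eval p.1 = G.eval p.2}.Finite := by
  have ht : f.natDegree * G.natDegree ≠ 0 := hdeg.ne_bot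
  obtain ⟨H, hH⟩ := abc.exists_natAbs_eval_le hf hcop hR hQ hdeg
  let V : Set ℤ := (f.eval ·) '' {x | R.IsRoot x} ∪ (G.eval ·) '' {y | Q.IsRoot y} ∪ Set.Icc (-H) H
  have hV : V.Finite := (((finite_setOfPred_isRoot hR₀).image _).union
    ((finite_setOfPred_isRoot hQ₀).image _)).union (Set.finite_Icc _ _)
  have hval {x y : ℤ} (hxy : f.eval x = G.eval y) : G.eval y ∈ V := by
    by_cases hRx : R.eval x = 0
    · exact .inl (.inl ⟨x, hRx, hxy⟩)
    by_cases hQy : Q.eval y = 0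
    · exact .inl (.inr ⟨y, hQy, rfl⟩)
    have hle := hH x y hxy hRx hQy
    exact .inr (Set.mem_Icc.2 (by omega))
  refine ((finite_preimage_eval (left_ne_zero_of_mul ht) hV).prod
    (finite_preimage_eval (right_ne_zero_of_mul ht) hV)).subset ?_
  rintro ⟨x, y⟩ (hxy : f.eval x = G.eval y)
  exact ⟨Set.mem_preimage.2 (hxy ▸ hval hxy), hval hxy⟩

end ABCConjecture

theorem natDegree_mul_add_natDegree_mul_lt {R : Type*} [Semiring R] [NoZeroDivisors R] {P Q : R[X]}
    (hP : P ≠ 0) (hQ : Q ≠ 0) {d e : ℕ} (hed : e ≤ d) (h : (P * Q).natDegree < e) :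
    P.natDegree * e + Q.natDegree * d < d * e := by
  rw [natDegree_mul hP hQ] at h
  nlinarith

theorem stmt3_general (abc : ABCConjecture) {ι κ τ : Type*} [Fintype ι] [Fintype κ] [Fintype τ]
    {f1 : ι → ℤ[X]} {f2 : κ → ℤ[X]} {g : τ → ℤ[X]} {α : ι → ℕ} {β : κ → ℕ} {γ : τ → ℕ}
    {f G : ℤ[X]}
    (hf : f = (∏ i, f1 i ^ α i) + (∏ j, f2 j ^ β j) ∨
          f = (∏ i, f1 i ^ α i) - (∏ j, f2 j ^ β j))
    (hG : G = ∏ k, g k ^ γ k)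
    (hdeg : ((∏ i, f1 i) * (∏ j, f2 j)).natDegree * G.natDegree +
      (∏ k, g k).natDegree * f.natDegree < f.natDegree * G.natDegree)
    (hcommon : ∀ d : ℤ[X], d ∣ (∏ i, f1 i) → d ∣ (∏ j, f2 j) → d.natDegree = 0)
    (hf1 : (∏ i, f1 i) ≠ 0) (hf2 : (∏ j, f2 j) ≠ 0) (hg : (∏ k, g k) ≠ 0) :
    {p : ℤ × ℤ | f.eval p.1 = G.eval p.2}.Finite := by
  have hdvd₁ := prod_pow_dvd_prod_pow_sum Finset.univ f1 α
  have hdvd₂ := prod_pow_dvd_prod_pow_sum Finset.univ f2 β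
  have hdvd := mul_dvd_mul_pow_add hdvd₁ hdvd₂
  have hcop : IsCoprime ((∏ i, f1 i ^ α i).map (algebraMap ℤ ℚ))
      ((∏ j, f2 j ^ β j).map (algebraMap ℤ ℚ)) := by
    have hpow := (isCoprime_map_of_natDegree_common_divisor_eq_zero ℚ hcommon).pow
      (m := ∑ i, α i) (n := ∑ j, β j)
    rw [← Polynomial.map_pow, ← Polynomial.map_pow] at hpow
    exact (hpow.of_isCoprime_of_dvd_left (Polynomial.map_dvd _ hdvd₁)).of_isCoprime_of_dvd_right
      (Polynomial.map_dvd _ hdvd₂)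
  have hQ : G ∣ (∏ k, g k) ^ ∑ k, γ k := hG ▸ prod_pow_dvd_prod_pow_sum Finset.univ g γ
  rcases hf with hf | hf
  · exact abc.finite_setOf_eval_eq_eval hf hcop (mul_ne_zero hf1 hf2) hg hdvd hQ hdeg
  · have hcop' := hcop.neg_right
    rw [← Polynomial.map_neg] at hcop'
    rw [← neg_dvd, ← mul_neg] at hdvd
    exact abc.finite_setOf_eval_eq_eval (hf.trans (sub_eq_add_neg _ _)) hcop'
      (mul_ne_zero hf1 hf2) hg hdvd hQ hdeg

theorem stmt3 (abc : ABCConjecture)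
    (l m n : ℕ)
    (f1 : Fin l → Polynomial ℤ) (f2 : Fin m → Polynomial ℤ) (g : Fin n → Polynomial ℤ)
    (α : Fin l → ℕ) (β : Fin m → ℕ) (γ : Fin n → ℕ)
    (hα : ∀ i, 0 < α i) (hβ : ∀ j, 0 < β j) (hγ : ∀ k, 0 < γ k)
    (f G : Polynomial ℤ)
    (hf : f = (∏ i, f1 i ^ α i) + (∏ j, f2 j ^ β j) ∨
          f = (∏ i, f1 i ^ α i) - (∏ j, f2 j ^ β j))
    (hG : G = ∏ k, g k ^ γ k)
    (h1 : G.natDegree < f.natDegree)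
    (h2 : 1 + ((∏ i, f1 i) * (∏ j, f2 j) * (∏ k, g k)).natDegree < G.natDegree)
    (h3 : ∀ d : Polynomial ℤ, d ∣ (∏ i, f1 i) → d ∣ (∏ j, f2 j) → d.natDegree = 0)
    (h4a : 0 < (∏ i, f1 i).leadingCoeff)
    (h4b : 0 < (∏ j, f2 j).leadingCoeff)
    (h4c : 0 < (∏ k, g k).leadingCoeff) :
    {p : ℤ × ℤ | f.eval p.1 = G.eval p.2}.Finite := by
  have hf1 : (∏ i, f1 i) ≠ 0 := leadingCoeff_ne_zero.1 h4a.ne'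
  have hf2 : (∏ j, f2 j) ≠ 0 := leadingCoeff_ne_zero.1 h4b.ne'
  have hg : (∏ k, g k) ≠ 0 := leadingCoeff_ne_zero.1 h4c.ne'
  exact stmt3_general abc hf hG (natDegree_mul_add_natDegree_mul_lt (mul_ne_zero hf1 hf2) hg h1.le
    (by omega)) h3 hf1 hf2 hg
end

section
/- Assume the ABC-Conjecture. Let f_{11}, ..., f_{1l}, f_{21}, ..., f_{2m}, g_1, ..., g_n ∈ ℤ[x] and let α_1, ..., α_l, β_1, ..., β_m, γ_1, ..., γ_n be positive integers. Set f(x) = f_{11}(x)^{α_1}···f_{1l}(x)^{α_l} + f_{21}(x)^{β_1}···f_{2m}(x)^{β_m} (or with a minus sign in place of the plus sign) and g(y) = g_1(y)^{γ_1}···g_n(y)^{γ_n}. Suppose (1) deg g > deg f; (2) deg f > 1 + deg(f_{11}·f_{12}···f_{1l}·f_{21}···f_{2m}·g_1···g_n); (3) the polynomials f_{11}·f_{12}···f_{1l} and f_{21}···f_{2m} have no non-constant common factor in ℤ[x]; (4) the leading coefficient of each of f_{11}···f_{1l}, f_{21}···f_{2m}, and g_1···g_n is positive. Then the equation f(x)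 = g(y) has only finitely many solutions (x, y) in integers. -/
open Polynomial

/-!
Write `f = A + B`, with `A` and `B` coprime over `ℚ`. All but finitely many solutions of
`f x = G y` have `A x`, `B x` and `f x` nonzero; consider such a solution. A Bézout identity
`u A + v B = R` bounds `gcd (A x) (B x)` by a constant, so up to a constant the ABC-Conjecture
applies to `A x + B x = G y`, and the radical of `A x * B x * G y` divides
`(rad A) x * (rad B) x * (rad G) y`. If `|y| ≤ |x|`, this divisor is `O(|x| ^ n)` with
`n = deg (rad A * rad B * rad G) ≤ deg f - 2`, whereas `f x` has order `|x| ^ deg f`; choosing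
`ε = 1 / deg f` bounds `|x|`. If `|x| ≤ |y|`, then `|y|` is bounded because `deg f < deg G`.
-/

open UniqueFactorizationMonoid Filter

section Radical

variable {M N : Type*} [CommMonoidWithZero M] [NormalizationMonoid M] [UniqueFactorizationMonoid M]
  [CommMonoidWithZero N] [NormalizationMonoid N] [UniqueFactorizationMonoid N]

lemma radical_map_dvd_map_radical (φ : M →*₀ N) (a : M) :
    radical (φ a) ∣ φ (radical a) := by
  obtain ha | ha := eq_or_ne (φ a) 0
  · simp [ha]
  · obtain ⟨n, hn⟩ := exists_dvd_radical_self_pow (a := a) fun h ↦ ha (by rw [h, map_zero])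
    rw [← exists_dvd_pow_iff_radical_dvd ha]
    exact ⟨n, map_pow φ (radical a) n ▸ map_dvd φ hn⟩

lemma radical_prod_pow_dvd_prod {ι : Type*} (s : Finset ι) (a : ι → M) (k : ι → ℕ) :
    radical (∏ i ∈ s, a i ^ k i) ∣ ∏ i ∈ s, a i :=
  radical_prod_dvd.trans <| Finset.prod_dvd_prod_of_dvd _ _ fun _ _ ↦
    radical_pow_dvd.trans radical_dvd_self

end Radical

lemma prod_ne_zero_of_prod_pow_ne_zero {ι : Type*} [Fintype ι] {M : Type*} [CommMonoidWithZero M]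
    {p : ι → M} {k : ι → ℕ} (hk : ∀ i, 0 < k i) (h : ∏ i, p i ^ k i ≠ 0) : ∏ i, p i ≠ 0 := by
  have hdvd : ∏ i, p i ∣ ∏ i, p i ^ k i :=
    Finset.prod_dvd_prod_of_dvd _ _ fun i _ ↦ dvd_pow_self _ (hk i).ne'
  exact ne_zero_of_dvd_ne_zero h hdvd

section RadicalEval

variable {R : Type*} [CommRing R] [IsDomain R] [NormalizationMonoid R]
  [UniqueFactorizationMonoid R]

lemma radical_eval_dvd_eval_radical (P : R[X]) (x : R) :
    radical (P.eval x) ∣ (radical P).eval x :=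
  radical_map_dvd_map_radical (evalRingHom x).toMonoidWithZeroHom P

lemma eval_radical_ne_zero {P : R[X]} {x : R} (h : P.eval x ≠ 0) : (radical P).eval x ≠ 0 :=
  ne_zero_of_dvd_ne_zero h (eval_dvd radical_dvd_self)

end RadicalEval

section Coprime

lemma isCoprime_prod_pow {S ι κ : Type*} [CommSemiring S] {s : Finset ι} {t : Finset κ} {p : ι → S}
    {q : κ → S} (k : ι → ℕ) (l : κ → ℕ) (h : IsCoprime (∏ i ∈ s, p i) (∏ j ∈ t, q j)) :
    IsCoprime (∏ i ∈ s, p i ^ k i) (∏ j ∈ t, q j ^ l j) :=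
  .prod_left fun i hi ↦ .prod_right fun j hj ↦
    (IsCoprime.prod_right_iff.1 (IsCoprime.prod_left_iff.1 h i hi) j hj).pow

lemma ne_zero_of_isCoprime_map_of_natDegree_add_pos {R S : Type*} [CommSemiring R]
    [CommSemiring S] [NoZeroDivisors S] {φ : R →+* S} (hφ : Function.Injective φ) {p q : R[X]}
    (h : IsCoprime (p.map φ) (q.map φ)) (hpq : 0 < (p + q).natDegree) : p ≠ 0 := by
  rintro rfl
  rw [Polynomial.map_zero, isCoprime_zero_left] at h
  rw [zero_add, ← natDegree_map_eq_of_injective hφ, natDegree_eq_zero_of_isUnit h] at hpq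
  exact hpq.false

variable {R K : Type*} [CommRing R] [IsDomain R] [Field K] [Algebra R K] [IsFractionRing R K]

lemma exists_map_integerNormalization_eq_C_mul (p : K[X]) :
    ∃ b : R, b ≠ 0 ∧ (IsLocalization.integerNormalization (nonZeroDivisors R) p).map
      (algebraMap R K) = C (algebraMap R K b) * p := by
  obtain ⟨b, hb, hbp⟩ := IsLocalization.integerNormalization_spec (nonZeroDivisors R) p
  refine ⟨b, nonZeroDivisors.ne_zero hb, ?_⟩
  rw [hbp, ← smul_eq_C_mul, algebraMap_smul]

lemma exists_mul_add_mul_eq_C_of_isCoprime_map_s4 {p q : R[X]}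
    (h : IsCoprime (p.map (algebraMap R K)) (q.map (algebraMap R K))) :
    ∃ r : R, r ≠ 0 ∧ ∃ u v : R[X], u * p + v * q = C r := by
  obtain ⟨u, v, huv⟩ := h
  obtain ⟨b, hb, hbu⟩ := exists_map_integerNormalization_eq_C_mul (R := R) u
  obtain ⟨c, hc, hcv⟩ := exists_map_integerNormalization_eq_C_mul (R := R) v
  refine ⟨b * c, mul_ne_zero hb hc, C c * IsLocalization.integerNormalization (nonZeroDivisors R) u,
    C b * IsLocalization.integerNormalization (nonZeroDivisors R) v, ?_⟩
  apply Polynomial.map_injective _ (IsFractionRing.injective R K)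
  simp only [Polynomial.map_add, Polynomial.map_mul, map_C, hbu, hcv, map_mul]
  linear_combination C (algebraMap R K b) * C (algebraMap R K c) * huv

lemma isCoprime_map_of_forall_dvd_natDegree_eq_zero [NormalizedGCDMonoid R] {p q : R[X]}
    (h : ∀ d : R[X], d ∣ p → d ∣ q → d.natDegree = 0) :
    IsCoprime (p.map (algebraMap R K)) (q.map (algebraMap R K)) := by
  refine IsRelPrime.isCoprime fun d hdp hdq ↦ ?_
  have hd : d ≠ 0 := by
    rintro rfl
    have hinj := IsFractionRing.injective R K
    rw [zero_dvd_iff, Polynomial.map_eq_zero_iff hinj] at hdp hdq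
    have hX : (X : R[X]).natDegree = 0 := h X (hdp ▸ dvd_zero X) (hdq ▸ dvd_zero X)
    exact one_ne_zero (natDegree_X.symm.trans hX)
  set e := (IsLocalization.integerNormalization (nonZeroDivisors R) d).primPart with he
  have he_prim : e.IsPrimitive := isPrimitive_primPart _
  have he_dvd : e.map (algebraMap R K) ∣ d := by
    obtain ⟨b, hb, hbd⟩ := exists_map_integerNormalization_eq_C_mul (R := R) d
    have hbK : algebraMap R K b ≠ 0 := IsFractionRing.to_map_eq_zero_iff.not.2 hb
    exact (isUnit_C.2 hbK.isUnit).dvd_mul_left.1 (hbd ▸ Polynomial.map_dvd _ (primPart_dvd _))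
  have he_const : e.natDegree = 0 := h e
    ((he_prim.dvd_iff_fraction_map_dvd_fraction_map K).2 (he_dvd.trans hdp))
    ((he_prim.dvd_iff_fraction_map_dvd_fraction_map K).2 (he_dvd.trans hdq))
  refine isUnit_or_eq_zero_of_isUnit_integerNormalization_primPart (R := R) hd ?_
  rw [← he, eq_C_of_natDegree_eq_zero he_const, isUnit_C]
  exact isPrimitive_iff_isUnit_of_C_dvd.1 he_prim _ (eq_C_of_natDegree_eq_zero he_const).symm.dvd

end Coprime

section Growth

lemma norm_eval_le_sum_norm_coeff_mul_pow {R : Type*} [SeminormedRing R] [NormOneClass R]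
    (P : R[X]) {x : R} {r : ℝ} (hr : 1 ≤ r) (hx : ‖x‖ ≤ r) :
    ‖P.eval x‖ ≤ (∑ i ∈ Finset.range (P.natDegree + 1), ‖P.coeff i‖) * r ^ P.natDegree := by
  rw [eval_eq_sum_range, Finset.sum_mul]
  refine norm_sum_le_of_le _ fun i hi ↦ (norm_mul_le _ _).trans ?_
  gcongr
  calc ‖x ^ i‖ ≤ ‖x‖ ^ i := norm_pow_le x i
    _ ≤ r ^ i := by gcongr
    _ ≤ r ^ P.natDegree := pow_le_pow_right₀ hr (Finset.mem_range_succ_iff.1 hi)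

lemma exists_forall_abs_eval_le (P : ℤ[X]) :
    ∃ c : ℝ, 0 ≤ c ∧ ∀ (x : ℤ) (r : ℝ), 1 ≤ r → |(x : ℝ)| ≤ r →
      |((P.eval x : ℤ) : ℝ)| ≤ c * r ^ P.natDegree := by
  refine ⟨∑ i ∈ Finset.range (P.natDegree + 1), ‖P.coeff i‖,
    Finset.sum_nonneg fun i _ ↦ norm_nonneg _, fun x r hr hx ↦ ?_⟩
  rw [← Int.norm_eq_abs] at hx ⊢
  exact norm_eval_le_sum_norm_coeff_mul_pow P hr hx

-- Away from its zeros an integer-valued function has absolute value at least `1`, so the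
-- asymptotic lower bound is a uniform one.
lemma exists_forall_abs_pow_natDegree_le (P : ℤ[X]) :
    ∃ c : ℝ, 0 < c ∧ ∀ x : ℤ, P.eval x ≠ 0 →
      |(x : ℝ)| ^ P.natDegree ≤ c * |((P.eval x : ℤ) : ℝ)| := by
  obtain rfl | hP := eq_or_ne P 0
  · exact ⟨1, one_pos, fun x hx ↦ absurd eval_zero hx⟩
  have hO : (X ^ P.natDegree : ℤ[X]).eval =O[cofinite] P.eval := by
    rw [Int.cofinite_eq, ← IsOrderBornology.cobounded_eq]
    exact isBigO_cobounded_of_degree_le (by rw [degree_X_pow, degree_eq_natDegree hP])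
  obtain ⟨c, hc, h⟩ := Asymptotics.bound_of_isBigO_cofinite hO
  refine ⟨c, hc, fun x hx ↦ ?_⟩
  simpa [Int.norm_eq_abs] using h hx

end Growth

section Diophantine

lemma finite_setOf_eval_eq_zero_and_eval_eq {R : Type*} [CommRing R] [IsDomain R] {P G : R[X]}
    (f : R[X]) (hP : P ≠ 0) (hG : 0 < G.natDegree) :
    {p : R × R | P.eval p.1 = 0 ∧ f.eval p.1 = G.eval p.2}.Finite := by
  refine Set.Finite.of_finite_fibers Prod.fst ?_ fun x _ ↦ ?_
  · refine (finite_setOfPred_isRoot hP).subset ?_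
    rintro _ ⟨p, ⟨hp, -⟩, rfl⟩
    exact hp
  · have hGx : G - C (f.eval x) ≠ 0 := fun h ↦ by
      rw [sub_eq_zero.1 h, natDegree_C] at hG
      exact hG.false
    refine ((finite_setOfPred_isRoot hGx).image (Prod.mk x)).subset ?_
    rintro ⟨_, y⟩ ⟨⟨-, hxy⟩, rfl⟩
    refine ⟨y, ?_, rfl⟩
    simpa [IsRoot, sub_eq_zero] using hxy.symm

lemma exists_forall_abs_le_of_eval_eq_of_abs_le {f G : ℤ[X]} (hfG : f.natDegree < G.natDegree) :
    ∃ c : ℝ, ∀ x y : ℤ, f.eval x = G.eval y → f.eval x ≠ 0 → |(x : ℝ)| ≤ |(y : ℝ)| →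
      |(y : ℝ)| ≤ c := by
  obtain ⟨a, ha, hfa⟩ := exists_forall_abs_eval_le f
  obtain ⟨b, hb, hGb⟩ := exists_forall_abs_pow_natDegree_le G
  refine ⟨b * a, fun x y hxy hfx hle ↦ ?_⟩
  obtain rfl | hy := eq_or_ne y 0
  · simpa using mul_nonneg hb.le ha
  have hy1 : 1 ≤ |(y : ℝ)| := mod_cast Int.one_le_abs hy
  refine le_of_mul_le_mul_right ?_ (pow_pos (one_pos.trans_le hy1) f.natDegree)
  calc |(y : ℝ)| * |(y : ℝ)| ^ f.natDegree = |(y : ℝ)| ^ (f.natDegree + 1) := (pow_succ' _ _).symm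
    _ ≤ |(y : ℝ)| ^ G.natDegree := pow_le_pow_right₀ hy1 hfG
    _ ≤ b * |((f.eval x : ℤ) : ℝ)| := hxy ▸ hGb y (hxy ▸ hfx)
    _ ≤ b * (a * |(y : ℝ)| ^ f.natDegree) := by gcongr; exact hfa x _ hy1 hle
    _ = b * a * |(y : ℝ)| ^ f.natDegree := (mul_assoc _ _ _).symm

lemma finite_setOf_abs_le_and_abs_le (r : ℝ) :
    {p : ℤ × ℤ | |(p.1 : ℝ)| ≤ r ∧ |(p.2 : ℝ)| ≤ r}.Finite := by
  have h : {x : ℤ | |(x : ℝ)| ≤ r}.Finite := by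
    refine (isCompact_iff_finite.1 (isCompact_closedBall (0 : ℤ) r)).subset fun x hx ↦ ?_
    simpa [Int.norm_eq_abs] using hx
  exact h.prod h

lemma exists_forall_radical_eval_le (A B G : ℤ[X]) :
    ∃ s : ℝ, 0 ≤ s ∧ ∀ (x y : ℤ) (r : ℝ), 1 ≤ r → |(x : ℝ)| ≤ r → |(y : ℝ)| ≤ r →
      A.eval x ≠ 0 → B.eval x ≠ 0 → G.eval y ≠ 0 →
      ((radical (A.eval x * B.eval x * G.eval y) : ℤ) : ℝ) ≤
        s * r ^ (radical A * radical B * radical G).natDegree := by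
  obtain ⟨a, ha, hAa⟩ := exists_forall_abs_eval_le (radical A)
  obtain ⟨b, hb, hBb⟩ := exists_forall_abs_eval_le (radical B)
  obtain ⟨g, hg, hGg⟩ := exists_forall_abs_eval_le (radical G)
  refine ⟨a * b * g, by positivity, fun x y r hr hx hy hA hB hG ↦ ?_⟩
  have hdvd : radical (A.eval x * B.eval x * G.eval y) ∣
      (radical A).eval x * (radical B).eval x * (radical G).eval y :=
    radical_mul_dvd.trans (mul_dvd_mul (radical_mul_dvd.trans (mul_dvd_mul
      (radical_eval_dvd_eval_radical A x) (radical_eval_dvd_eval_radical B x)))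
      (radical_eval_dvd_eval_radical G y))
  have hne : (radical A).eval x * (radical B).eval x * (radical G).eval y ≠ 0 :=
    mul_ne_zero (mul_ne_zero (eval_radical_ne_zero hA) (eval_radical_ne_zero hB))
      (eval_radical_ne_zero hG)
  have hle : ((radical (A.eval x * B.eval x * G.eval y) : ℤ) : ℝ) ≤
      |(((radical A).eval x * (radical B).eval x * (radical G).eval y : ℤ) : ℝ)| :=
    mod_cast Int.le_of_dvd (abs_pos.2 hne) ((dvd_abs _ _).2 hdvd)
  rw [Int.cast_mul, Int.cast_mul, abs_mul, abs_mul] at hle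
  calc ((radical (A.eval x * B.eval x * G.eval y) : ℤ) : ℝ)
    _ ≤ |(((radical A).eval x : ℤ) : ℝ)| * |(((radical B).eval x : ℤ) : ℝ)| *
        |(((radical G).eval y : ℤ) : ℝ)| := hle
    _ ≤ a * r ^ (radical A).natDegree * (b * r ^ (radical B).natDegree) *
        (g * r ^ (radical G).natDegree) := by
      gcongr
      · exact hAa x r hr hx
      · exact hBb x r hr hx
      · exact hGg y r hr hy
    _ = a * b * g * r ^ (radical A * radical B * radical G).natDegree := by
      rw [natDegree_mul (mul_ne_zero radical_ne_zero radical_ne_zero) radical_ne_zero,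
        natDegree_mul radical_ne_zero radical_ne_zero]
      ring

end Diophantine

lemma le_mul_rpow_of_pow_le_mul_rpow {t b c : ℝ} {n D : ℕ} (ht : 1 ≤ t) (hb : 0 ≤ b) (hc : 0 ≤ c)
    (hnD : n + 2 ≤ D) (h : t ^ D ≤ c * (b * t ^ n) ^ (1 + 1 / (D : ℝ))) :
    t ≤ c * b ^ (1 + 1 / (D : ℝ)) := by
  have ht0 : 0 < t := one_pos.trans_le ht
  obtain ⟨k, rfl⟩ : ∃ k, D = k + 2 := ⟨D - 2, by omega⟩
  have hexp : (n : ℝ) * (1 + 1 / ((k + 2 : ℕ) : ℝ)) ≤ (k + 1 : ℕ) := by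
    have hn : (n : ℝ) ≤ k := mod_cast (by omega : n ≤ k)
    push_cast
    rw [mul_one_add, mul_one_div]
    gcongr
    rw [div_le_one (by positivity)]
    linarith
  have hpow : (t ^ n) ^ (1 + 1 / ((k + 2 : ℕ) : ℝ)) ≤ t ^ (k + 1) := by
    rw [← Real.rpow_natCast, ← Real.rpow_mul ht0.le, ← Real.rpow_natCast]
    exact Real.rpow_le_rpow_of_exponent_le ht hexp
  refine le_of_mul_le_mul_right ?_ (pow_pos ht0 (k + 1))
  calc t * t ^ (k + 1) = t ^ (k + 2) := (pow_succ' t (k + 1)).symm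
    _ ≤ c * (b * t ^ n) ^ (1 + 1 / ((k + 2 : ℕ) : ℝ)) := h
    _ = c * (b ^ (1 + 1 / ((k + 2 : ℕ) : ℝ)) * (t ^ n) ^ (1 + 1 / ((k + 2 : ℕ) : ℝ))) := by
      rw [Real.mul_rpow hb (by positivity)]
    _ ≤ c * (b ^ (1 + 1 / ((k + 2 : ℕ) : ℝ)) * t ^ (k + 1)) := by gcongr
    _ = c * b ^ (1 + 1 / ((k + 2 : ℕ) : ℝ)) * t ^ (k + 1) := (mul_assoc _ _ _).symm

namespace ABCConjecture

lemma exists_forall_abs_le_of_natAbs_add_natAbs_eq (abc : ABCConjecture) {ε : ℝ} (hε : 0 < ε) :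
    ∃ K : ℝ, 0 < K ∧ ∀ a b c : ℤ, a ≠ 0 → b ≠ 0 → IsCoprime a b → a.natAbs + b.natAbs = c.natAbs →
      |(c : ℝ)| ≤ K * ((radical (a * b * c) : ℤ) : ℝ) ^ (1 + ε) := by
  obtain ⟨K, hK⟩ := abc ε hε
  refine ⟨max K 1, by positivity, fun a b c ha hb hab h ↦ ?_⟩
  have ha_pos := Int.natAbs_pos.2 ha
  have hb_pos := Int.natAbs_pos.2 hb
  have hbound := hK a.natAbs b.natAbs c.natAbs ha_pos hb_pos (by omega)
    (Int.isCoprime_iff_gcd_eq_one.1 hab) h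
  rw [← Nat.radical_eq_prod_primeFactors, ← Int.natAbs_mul, ← Int.natAbs_mul, Nat.cast_natAbs,
    Int.cast_abs] at hbound
  rw [← Int.radical_natAbs_eq_radical, Int.cast_natCast]
  exact hbound.trans (by gcongr; exact le_max_left K 1)

-- Whatever the signs of `a` and `b`, one of `|a|`, `|b|`, `|a + b|` is the sum of the other two.
lemma exists_forall_abs_add_le (abc : ABCConjecture) {ε : ℝ} (hε : 0 < ε) :
    ∃ K : ℝ, 0 < K ∧ ∀ a b : ℤ, a ≠ 0 → b ≠ 0 → a + b ≠ 0 → IsCoprime a b →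
      |((a + b : ℤ) : ℝ)| ≤ K * ((radical (a * b * (a + b)) : ℤ) : ℝ) ^ (1 + ε) := by
  obtain ⟨K, hK0, hK⟩ := abc.exists_forall_abs_le_of_natAbs_add_natAbs_eq hε
  refine ⟨K, hK0, fun a b ha hb hab hcop ↦ ?_⟩
  have hsigns : a.natAbs + b.natAbs = (a + b).natAbs ∨ a.natAbs + (a + b).natAbs = b.natAbs ∨
      b.natAbs + (a + b).natAbs = a.natAbs := by omega
  obtain h | h | h := hsigns
  · exact hK a b (a + b) ha hb hcop h
  · have hle : |((a + b : ℤ) : ℝ)| ≤ |(b : ℝ)| :=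
      mod_cast (by simp only [Int.abs_eq_natAbs]; omega : |a + b| ≤ |b|)
    rw [mul_right_comm]
    exact hle.trans (hK a (a + b) b ha hab (by simpa [add_comm] using hcop.add_mul_left_right 1) h)
  · have hle : |((a + b : ℤ) : ℝ)| ≤ |(a : ℝ)| :=
      mod_cast (by simp only [Int.abs_eq_natAbs]; omega : |a + b| ≤ |a|)
    rw [mul_rotate]
    exact hle.trans (hK b (a + b) a hb hab (by simpa using hcop.symm.add_mul_left_right 1) h)

-- Dividing by `d = gcd a b`, which divides `R`, costs at most the constant factor `|R|`.
lemma exists_forall_abs_add_le_of_mul_add_mul_eq (abc : ABCConjecture) {ε : ℝ} (hε : 0 < ε)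
    {R : ℤ} (hR : R ≠ 0) :
    ∃ K : ℝ, 0 < K ∧ ∀ a b u v : ℤ, a ≠ 0 → b ≠ 0 → a + b ≠ 0 → u * a + v * b = R →
      |((a + b : ℤ) : ℝ)| ≤ K * ((radical (a * b * (a + b)) : ℤ) : ℝ) ^ (1 + ε) := by
  obtain ⟨K, hK0, hK⟩ := abc.exists_forall_abs_add_le hε
  refine ⟨|(R : ℝ)| * K, by positivity, fun a b u v ha hb hab huv ↦ ?_⟩
  obtain ⟨a', b', hcop, ha', hb'⟩ := Int.exists_gcd_one (Int.gcd_pos_of_ne_zero_left b ha)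
  generalize (Int.gcd a b : ℤ) = d at ha' hb'
  subst ha' hb'
  have hdR : |(d : ℝ)| ≤ |(R : ℝ)| := by
    have hd : d ∣ R := ⟨u * a' + v * b', by rw [← huv]; ring⟩
    exact mod_cast Int.le_of_dvd (abs_pos.2 hR) ((abs_dvd_abs d R).2 hd)
  rw [← add_mul] at hab ⊢
  have hrad : radical (a' * b' * (a' + b')) ≤ radical (a' * d * (b' * d) * ((a' + b') * d)) :=
    Int.le_of_dvd (Int.radical_pos _) <|
      radical_dvd_radical ⟨d ^ 3, by ring⟩ (mul_ne_zero (mul_ne_zero ha hb) hab)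
  have hrad_pos := Int.radical_pos (a' * b' * (a' + b'))
  rw [Int.cast_mul, abs_mul, mul_comm, mul_assoc]
  gcongr
  calc |((a' + b' : ℤ) : ℝ)| ≤ K * ((radical (a' * b' * (a' + b')) : ℤ) : ℝ) ^ (1 + ε) :=
        hK a' b' (left_ne_zero_of_mul ha) (left_ne_zero_of_mul hb) (left_ne_zero_of_mul hab)
          (Int.isCoprime_iff_gcd_eq_one.2 hcop)
    _ ≤ K * ((radical (a' * d * (b' * d) * ((a' + b') * d)) : ℤ) : ℝ) ^ (1 + ε) := by gcongr

lemma exists_forall_abs_le_of_eval_add_eval_eq (abc : ABCConjecture) {A B G : ℤ[X]}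
    (hAB : IsCoprime (A.map (algebraMap ℤ ℚ)) (B.map (algebraMap ℤ ℚ)))
    (hdeg : 1 + (radical A * radical B * radical G).natDegree < (A + B).natDegree) :
    ∃ c : ℝ, ∀ x y : ℤ, (A + B).eval x = G.eval y → (A * B * (A + B)).eval x ≠ 0 →
      |(y : ℝ)| ≤ |(x : ℝ)| → |(x : ℝ)| ≤ c := by
  obtain ⟨R, hR, u, v, huv⟩ := exists_mul_add_mul_eq_C_of_isCoprime_map_s4 hAB
  obtain ⟨K, hK0, hK⟩ := abc.exists_forall_abs_add_le_of_mul_add_mul_eq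
    (ε := 1 / ((A + B).natDegree : ℝ)) (one_div_pos.2 (mod_cast hdeg.pos)) hR
  obtain ⟨c, hc, hpow⟩ := exists_forall_abs_pow_natDegree_le (A + B)
  obtain ⟨s, hs, hrad⟩ := exists_forall_radical_eval_le A B G
  refine ⟨max 1 (c * K * s ^ (1 + 1 / ((A + B).natDegree : ℝ))), fun x y hxy hx hle ↦ ?_⟩
  obtain hx1 | hx1 := le_total |(x : ℝ)| 1
  · exact hx1.trans (le_max_left _ _)
  refine le_max_of_le_right <| le_mul_rpow_of_pow_le_mul_rpow hx1 hs (by positivity)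
    (by omega : (radical A * radical B * radical G).natDegree + 2 ≤ (A + B).natDegree) ?_
  simp only [eval_mul, mul_ne_zero_iff] at hx
  obtain ⟨⟨hA, hB⟩, hf⟩ := hx
  have hbezout : u.eval x * A.eval x + v.eval x * B.eval x = R := by
    simpa using congr_arg (eval x) huv
  have habc := hK _ _ _ _ hA hB (eval_add (p := A) ▸ hf) hbezout
  rw [← eval_add, hxy] at habc
  have hrad_pos := Int.radical_pos (A.eval x * B.eval x * G.eval y)
  calc |(x : ℝ)| ^ (A + B).natDegree ≤ c * |((G.eval y : ℤ) : ℝ)| := hxy ▸ hpow x hf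
    _ ≤ c * (K * ((radical (A.eval x * B.eval x * G.eval y) : ℤ) : ℝ) ^
          (1 + 1 / ((A + B).natDegree : ℝ))) := by gcongr
    _ ≤ c * (K * (s * |(x : ℝ)| ^ (radical A * radical B * radical G).natDegree) ^
          (1 + 1 / ((A + B).natDegree : ℝ))) := by
      gcongr
      exact hrad x y _ hx1 le_rfl hle hA hB (hxy ▸ hf)
    _ = c * K * (s * |(x : ℝ)| ^ (radical A * radical B * radical G).natDegree) ^
          (1 + 1 / ((A + B).natDegree : ℝ)) := (mul_assoc _ _ _).symm

theorem finite_setOf_eval_add_eq_eval (abc : ABCConjecture) {A B G : ℤ[X]}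
    (hAB : IsCoprime (A.map (algebraMap ℤ ℚ)) (B.map (algebraMap ℤ ℚ)))
    (hG : (A + B).natDegree < G.natDegree)
    (hdeg : 1 + (radical A * radical B * radical G).natDegree < (A + B).natDegree) :
    {p : ℤ × ℤ | (A + B).eval p.1 = G.eval p.2}.Finite := by
  have hA : A ≠ 0 := ne_zero_of_isCoprime_map_of_natDegree_add_pos Int.cast_injective hAB hdeg.pos
  have hB : B ≠ 0 := ne_zero_of_isCoprime_map_of_natDegree_add_pos Int.cast_injective hAB.symm
    (add_comm A B ▸ hdeg.pos)
  have hf : A + B ≠ 0 := ne_zero_of_natDegree_gt hdeg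
  obtain ⟨c, hc⟩ := abc.exists_forall_abs_le_of_eval_add_eval_eq hAB hdeg
  obtain ⟨c', hc'⟩ := exists_forall_abs_le_of_eval_eq_of_abs_le hG
  refine ((finite_setOf_eval_eq_zero_and_eval_eq (A + B) (mul_ne_zero (mul_ne_zero hA hB) hf)
    hG.pos).union (finite_setOf_abs_le_and_abs_le (max c c'))).subset ?_
  rintro ⟨x, y⟩ hxy
  by_cases hx : (A * B * (A + B)).eval x = 0
  · exact .inl ⟨hx, hxy⟩
  · have hfx : (A + B).eval x ≠ 0 := fun h ↦ hx (by rw [eval_mul, h, mul_zero])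
    right
    obtain hle | hle := le_total |(y : ℝ)| |(x : ℝ)|
    · have hxc := le_max_of_le_left (c := c') (hc x y hxy hx hle)
      exact ⟨hxc, hle.trans hxc⟩
    · have hyc := le_max_of_le_right (b := c) (hc' x y hxy hfx hle)
      exact ⟨hle.trans hyc, hyc⟩

end ABCConjecture

theorem stmt4_general (abc : ABCConjecture) {ι κ τ : Type*} [Fintype ι] [Fintype κ] [Fintype τ]
    (f1 : ι → ℤ[X]) (f2 : κ → ℤ[X]) (g : τ → ℤ[X]) (α : ι → ℕ) (β : κ → ℕ) (γ : τ → ℕ)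
    (hα : ∀ i, 0 < α i) (hβ : ∀ j, 0 < β j) (hγ : ∀ k, 0 < γ k) (f G : ℤ[X])
    (hf : f = (∏ i, f1 i ^ α i) + (∏ j, f2 j ^ β j) ∨
          f = (∏ i, f1 i ^ α i) - (∏ j, f2 j ^ β j))
    (hG : G = ∏ k, g k ^ γ k)
    (h1 : f.natDegree < G.natDegree)
    (h2 : 1 + ((∏ i, f1 i) * (∏ j, f2 j) * (∏ k, g k)).natDegree < f.natDegree)
    (h3 : ∀ d : ℤ[X], d ∣ (∏ i, f1 i) → d ∣ (∏ j, f2 j) → d.natDegree = 0) :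
    {p : ℤ × ℤ | f.eval p.1 = G.eval p.2}.Finite := by
  obtain ⟨B, hfB, hB⟩ : ∃ B, f = ∏ i, f1 i ^ α i + B ∧ Associated B (∏ j, f2 j ^ β j) := by
    obtain hf | hf := hf
    · exact ⟨_, hf, .rfl⟩
    · exact ⟨_, hf.trans (sub_eq_add_neg _ _), Associated.rfl.neg_left⟩
  have hcop : IsCoprime ((∏ i, f1 i ^ α i).map (algebraMap ℤ ℚ)) (B.map (algebraMap ℤ ℚ)) := by
    refine IsCoprime.of_isCoprime_of_dvd_right ?_ (Polynomial.map_dvd _ hB.dvd)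
    have hprod := isCoprime_map_of_forall_dvd_natDegree_eq_zero (K := ℚ) h3
    simp only [Polynomial.map_prod, Polynomial.map_pow] at hprod ⊢
    exact isCoprime_prod_pow α β hprod
  subst hfB hG
  have hf1 : ∏ i, f1 i ≠ 0 := prod_ne_zero_of_prod_pow_ne_zero hα <|
    ne_zero_of_isCoprime_map_of_natDegree_add_pos Int.cast_injective hcop h2.pos
  have hf2 : ∏ j, f2 j ≠ 0 := prod_ne_zero_of_prod_pow_ne_zero hβ <| hB.ne_zero_iff.1 <|
    ne_zero_of_isCoprime_map_of_natDegree_add_pos Int.cast_injective hcop.symm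
      (add_comm B _ ▸ h2.pos)
  have hg : ∏ k, g k ≠ 0 := prod_ne_zero_of_prod_pow_ne_zero hγ (ne_zero_of_natDegree_gt h1)
  refine abc.finite_setOf_eval_add_eq_eval hcop h1 (h2.trans_le' ?_)
  rw [radical_eq_of_associated hB]
  gcongr
  exact natDegree_le_of_dvd (mul_dvd_mul (mul_dvd_mul (radical_prod_pow_dvd_prod _ f1 α)
    (radical_prod_pow_dvd_prod _ f2 β)) (radical_prod_pow_dvd_prod _ g γ))
    (mul_ne_zero (mul_ne_zero hf1 hf2) hg)

theorem stmt4 (abc : ABCConjecture)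
    (l m n : ℕ)
    (f1 : Fin l → Polynomial ℤ) (f2 : Fin m → Polynomial ℤ) (g : Fin n → Polynomial ℤ)
    (α : Fin l → ℕ) (β : Fin m → ℕ) (γ : Fin n → ℕ)
    (hα : ∀ i, 0 < α i) (hβ : ∀ j, 0 < β j) (hγ : ∀ k, 0 < γ k)
    (f G : Polynomial ℤ)
    (hf : f = (∏ i, f1 i ^ α i) + (∏ j, f2 j ^ β j) ∨
          f = (∏ i, f1 i ^ α i) - (∏ j, f2 j ^ β j))
    (hG : G = ∏ k, g k ^ γ k)
    (h1 : f.natDegree < G.natDegree)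
    (h2 : 1 + ((∏ i, f1 i) * (∏ j, f2 j) * (∏ k, g k)).natDegree < f.natDegree)
    (h3 : ∀ d : Polynomial ℤ, d ∣ (∏ i, f1 i) → d ∣ (∏ j, f2 j) → d.natDegree = 0)
    (h4a : 0 < (∏ i, f1 i).leadingCoeff)
    (h4b : 0 < (∏ j, f2 j).leadingCoeff)
    (h4c : 0 < (∏ k, g k).leadingCoeff) :
    {p : ℤ × ℤ | f.eval p.1 = G.eval p.2}.Finite := by
  exact stmt4_general abc f1 f2 g α β γ hα hβ hγ f G hf hG h1 h2 h3
end

section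
/- Assume the ABC-Conjecture. Let m > 2 and let q_1, ..., q_m ∈ ℤ be pairwise distinct. Let f(x) = ∏_{i=1}^k f_i(x)^{l_i}, where each f_i ∈ ℤ[x] and each l_i ≥ 2, and suppose f is nonconstant. Then the equation (y + q_1)(y + q_2)···(y + q_m) = f(x) has only finitely many solutions (x, y) in integers. -/
open Polynomial

/-!
Let `q₁ < q₂ < q₃` be integers, `a = q₂ - q₁`, `b = q₃ - q₂` and `v = y + q₂`. The polynomial
`F = (v - a) ^ a * (v + b) ^ b` differs from the constant `c = (-a) ^ a * b ^ b` by a multiple of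
`v ^ 2`. Hence the radical of `F * (F - c)` is at most that of `(y + q₁) * (y + q₂) * (y + q₃)`
times the cofactor `|F - c| / v ^ 2`, of size `|y| ^ (a + b - 2)`. The ABC conjecture for
`c + (F - c) = F`, whose terms have a common divisor bounded by `|c|`, therefore gives Langevin's
bound: the radical of the product of three distinct linear factors is at least of order `|y| ^ t`
for every `t < 2`.

A product of values of polynomials to exponents at least two is powerful. If `∏ q ∈ Q, (y + q)` is
powerful, then up to the fixed primes dividing the differences of elements of `Q` every factor
`y + q` is powerful too, so that the radical of the product of three of them is at most of order
`|y| ^ (3 / 2)`. Thus `y` is bounded, and each `y` leaves finitely many `x` since `f` is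
nonconstant.
-/

open Filter Asymptotics UniqueFactorizationMonoid

section Radical

variable {M : Type*} [CommMonoidWithZero M] [NormalizationMonoid M] [UniqueFactorizationMonoid M]

lemma radical_pow_dvd_of_forall_prime {k : ℕ} {m n : M}
    (h : ∀ p, Prime p → p ∣ m → p ^ k ∣ n) : radical m ^ k ∣ n := by
  rw [radical, ← Finset.prod_pow]
  refine Finset.prod_dvd_of_isRelPrime (fun p hp q hq hpq ↦ ?_) fun p hp ↦ ?_
  · exact (pairwise_primeFactors_isRelPrime hp hq hpq).pow
  · have hp' := mem_primeFactors.mp hp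
    exact h p (prime_of_normalized_factor p hp') (dvd_of_mem_normalizedFactors hp')

lemma radical_mul_dvd_radical_mul_of_dvd_pow {k : ℕ} {m n : M} (hn : n ≠ 0) (h : m ∣ n ^ k)
    (g : M) : radical (m * g) ∣ radical n * g :=
  radical_mul_dvd.trans <| mul_dvd_mul
    ((radical_dvd_radical h (pow_ne_zero k hn)).trans radical_pow_dvd) radical_dvd_self

end Radical

lemma cast_radical_mul_le {k : ℕ} {m n g : ℤ} (hn : n ≠ 0) (h : m ∣ n ^ k) (hg : g ≠ 0) :
    ((radical (m * g) : ℤ) : ℝ) ≤ (radical n : ℤ) * |(g : ℝ)| := by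
  have hpos := Int.radical_pos n
  have hdvd : radical (m * g) ∣ radical n * |g| :=
    (radical_mul_dvd_radical_mul_of_dvd_pow hn h g).trans (mul_dvd_mul_left _ (self_dvd_abs g))
  exact_mod_cast Int.le_of_dvd (by positivity) hdvd

lemma cast_radical_mul_mul_sq_le {k : ℕ} {m n w z : ℤ} (hn : n ≠ 0) (hz : z ≠ 0)
    (hsq : w ^ 2 ∣ z) (h : m * w ∣ n ^ k) :
    ((radical (m * z) : ℤ) : ℝ) * (w : ℝ) ^ 2 ≤ (radical n : ℤ) * |(z : ℝ)| := by
  obtain ⟨g, rfl⟩ := hsq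
  have hdvd : m * w ^ 2 ∣ n ^ (k * 2) := calc
    m * w ^ 2 ∣ (m * w) ^ 2 := ⟨m, by ring⟩
    _ ∣ n ^ (k * 2) := pow_mul n k 2 ▸ pow_dvd_pow_of_dvd h 2
  calc ((radical (m * (w ^ 2 * g)) : ℤ) : ℝ) * (w : ℝ) ^ 2
      ≤ (radical n : ℤ) * |(g : ℝ)| * (w : ℝ) ^ 2 := by
        rw [← mul_assoc]
        gcongr
        exact cast_radical_mul_le hn hdvd (right_ne_zero_of_mul hz)
    _ = (radical n : ℤ) * |((w ^ 2 * g : ℤ) : ℝ)| := by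
        rw [Int.cast_mul, Int.cast_pow, abs_mul, abs_sq]
        ring

-- The logarithmic derivative `a / (v - a) + b / (v + b)` vanishes at `v = 0`.
lemma sq_dvd_sub_pow_mul_add_pow_sub {R : Type*} [CommRing R] {a b : ℕ} (ha : a ≠ 0) (hb : b ≠ 0)
    (v : R) : v ^ 2 ∣ (v - a) ^ a * (v + b) ^ b - (-a) ^ a * b ^ b := by
  obtain ⟨j, hj⟩ := powAddExpansion (-(a : R)) v a
  obtain ⟨k, hk⟩ := powAddExpansion (b : R) v b
  have hja : (a : R) * (-a) ^ (a - 1) = -(-a) ^ a := by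
    rw [← mul_pow_sub_one ha (-(a : R)), neg_mul, neg_neg]
  have hkb : (b : R) * b ^ (b - 1) = b ^ b := mul_pow_sub_one hb _
  rw [hja] at hj
  rw [hkb] at hk
  rw [sub_eq_neg_add v, hj, add_comm v, hk]
  exact ⟨(-a) ^ a * (1 - v) * k + b ^ b * (1 + v) * j + j * k * v ^ 2 - (-a) ^ a * b ^ b, by ring⟩

lemma exists_lt_lt_of_two_lt_card {α : Type*} [LinearOrder α] {s : Finset α}
    (hs : 2 < s.card) : ∃ x ∈ s, ∃ y ∈ s, ∃ z ∈ s, x < y ∧ y < z := by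
  let e := s.orderEmbOfFin rfl
  have hmem := s.orderEmbOfFin_mem rfl
  exact ⟨e ⟨0, by omega⟩, hmem _, e ⟨1, by omega⟩, hmem _, e ⟨2, hs⟩, hmem _,
    e.lt_iff_lt.mpr (by simp), e.lt_iff_lt.mpr (by simp)⟩

lemma finite_setOf_eval_eq {R : Type*} [CommRing R] [IsDomain R] {f : R[X]}
    (hf : 0 < f.natDegree) (c : R) : {x | f.eval x = c}.Finite := by
  have hfc : f ≠ C c := fun h ↦ hf.ne' (h ▸ natDegree_C c)
  exact (rootSet_finite (f - C c) R).subset (preimage_eval_singleton hfc).subset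

/-- An element is powerful (squareful) if each of its prime divisors divides it at least twice;
units and `0` are powerful. -/
def IsPowerful {M : Type*} [CommMonoidWithZero M] (n : M) : Prop :=
  ∀ p, Prime p → p ∣ n → p ^ 2 ∣ n

lemma IsPowerful.pow {M : Type*} [CommMonoidWithZero M] (n : M) {k : ℕ} (hk : 2 ≤ k) :
    IsPowerful (n ^ k) := fun p hp h ↦
  (pow_dvd_pow p hk).trans (pow_dvd_pow_of_dvd (hp.dvd_of_dvd_pow h) k)

lemma IsPowerful.prod {M ι : Type*} [CommMonoidWithZero M] {s : Finset ι} {f : ι → M}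
    (h : ∀ i ∈ s, IsPowerful (f i)) : IsPowerful (∏ i ∈ s, f i) := fun p hp hdvd ↦ by
  obtain ⟨i, hi, hpi⟩ := (hp.dvd_finsetProd_iff f).mp hdvd
  exact (h i hi p hp hpi).trans (Finset.dvd_prod_of_mem f hi)

lemma IsPowerful.sq_dvd_prod_offDiag_sq_mul_add {R : Type*} [CommRing R] [IsDomain R]
    {Q : Finset R} {y q p : R} (h : IsPowerful (∏ q ∈ Q, (y + q))) (hq : q ∈ Q)
    (hp : Prime p) (hpq : p ∣ y + q) : p ^ 2 ∣ (∏ r ∈ Q.offDiag, (r.1 - r.2)) ^ 2 * (y + q) := by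
  classical
  by_cases hpD : p ∣ ∏ r ∈ Q.offDiag, (r.1 - r.2)
  · exact (pow_dvd_pow_of_dvd hpD 2).mul_right _
  have hsq : p ^ 2 ∣ (y + q) * ∏ r ∈ Q.erase q, (y + r) := by
    rw [Finset.mul_prod_erase Q (y + ·) hq]
    exact h p hp (hpq.trans (Finset.dvd_prod_of_mem (y + ·) hq))
  refine (hp.pow_dvd_of_dvd_mul_right 2 (fun hrest ↦ hpD ?_) hsq).mul_left _
  obtain ⟨r, hr, hpr⟩ := (hp.dvd_finsetProd_iff _).mp hrest
  have hqr : (q, r) ∈ Q.offDiag := Finset.mem_offDiag.mpr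
    ⟨hq, Finset.mem_of_mem_erase hr, (Finset.ne_of_mem_erase hr).symm⟩
  have hpqr : p ∣ q - r := by simpa only [add_sub_add_left_eq_sub] using dvd_sub hpq hpr
  exact hpqr.trans (Finset.dvd_prod_of_mem (fun r : R × R ↦ r.1 - r.2) hqr)

lemma IsPowerful.radical_prod_sq_dvd {R : Type*} [CommRing R] [IsDomain R]
    [NormalizationMonoid R] [UniqueFactorizationMonoid R] {Q T : Finset R} {y : R}
    (h : IsPowerful (∏ q ∈ Q, (y + q))) (hT : T ⊆ Q) :
    radical (∏ q ∈ T, (y + q)) ^ 2 ∣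
      (∏ r ∈ Q.offDiag, (r.1 - r.2)) ^ 2 * ∏ q ∈ T, (y + q) := by
  refine radical_pow_dvd_of_forall_prime fun p hp hdvd ↦ ?_
  obtain ⟨q, hq, hpq⟩ := (hp.dvd_finsetProd_iff _).mp hdvd
  exact (h.sq_dvd_prod_offDiag_sq_mul_add (hT hq) hp hpq).trans
    (mul_dvd_mul_left _ (Finset.dvd_prod_of_mem (y + ·) hq))

lemma tendsto_norm_intCast_cofinite_atTop :
    Tendsto (fun y : ℤ ↦ ‖(y : ℝ)‖) cofinite atTop :=
  tendsto_norm_cocompact_atTop.comp Int.tendsto_coe_cofinite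

lemma tendsto_cofinite_of_tendsto_norm_intCast {α : Type*} {l : Filter α} {f : α → ℤ}
    (h : Tendsto (fun x ↦ ‖(f x : ℝ)‖) l atTop) : Tendsto f l cofinite := by
  rw [← cocompact_eq_cofinite, ← Metric.cobounded_eq_cocompact,
    ← tendsto_norm_atTop_iff_cobounded]
  simpa only [Int.norm_cast_real] using h

lemma isEquivalent_intCast_add_const (q : ℤ) :
    (fun y : ℤ ↦ ((y + q : ℤ) : ℝ)) ~[cofinite] fun y ↦ (y : ℝ) := by
  simpa only [Int.cast_add] using
    IsEquivalent.refl.add_const_of_norm_tendsto_atTop tendsto_norm_intCast_cofinite_atTop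

lemma tendsto_norm_atTop_of_isTheta_pow {α : Type*} {l : Filter α} {f g : α → ℝ} {d : ℕ}
    (hd : d ≠ 0) (hg : Tendsto (fun x ↦ ‖g x‖) l atTop) (hf : f =Θ[l] fun x ↦ g x ^ d) :
    Tendsto (fun x ↦ ‖f x‖) l atTop := by
  refine hf.tendsto_norm_atTop_iff.mpr ?_
  simpa only [Function.comp_def, norm_pow] using (tendsto_pow_atTop hd).comp hg

lemma isBigO_intCast_of_dvd {α : Type*} {l : Filter α} {f g : α → ℤ}
    (hdvd : ∀ᶠ x in l, f x ∣ g x) (hg : ∀ᶠ x in l, g x ≠ 0) :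
    (fun x ↦ (f x : ℝ)) =O[l] fun x ↦ (g x : ℝ) := by
  refine .of_bound' ?_
  filter_upwards [hdvd, hg] with x hx hgx
  rw [Int.norm_cast_real, Int.norm_cast_real, Int.norm_eq_abs, Int.norm_eq_abs]
  exact_mod_cast Int.le_of_dvd (abs_pos.mpr hgx) ((abs_dvd_abs _ _).mpr hx)

lemma isEquivalent_intCast_prod_add_const (T : Finset ℤ) :
    (fun y : ℤ ↦ ((∏ q ∈ T, (y + q) : ℤ) : ℝ)) ~[cofinite] fun y ↦ (y : ℝ) ^ T.card := by
  simpa only [Int.cast_prod, Finset.prod_const] using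
    IsEquivalent.finsetProd (s := T) fun q _ ↦ isEquivalent_intCast_add_const q

lemma eventually_prod_add_ne_zero (T : Finset ℤ) :
    ∀ᶠ y in cofinite, ∏ q ∈ T, (y + q) ≠ 0 := by
  simp only [Finset.prod_ne_zero_iff, eventually_all_finset]
  exact fun q _ ↦ (eventually_cofinite_ne (-q)).mono fun y hy ↦ by omega

lemma isBigO_radical_prod_add_sq_of_isPowerful {Q T : Finset ℤ} (hT : T ⊆ Q) :
    (fun y ↦ ((radical (∏ q ∈ T, (y + q)) : ℤ) : ℝ) ^ 2)
      =O[cofinite ⊓ 𝓟 {y : ℤ | IsPowerful (∏ q ∈ Q, (y + q))}]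
      fun y : ℤ ↦ (y : ℝ) ^ T.card := by
  have hD : (∏ r ∈ Q.offDiag, (r.1 - r.2)) ^ 2 ≠ 0 := pow_ne_zero 2 <|
    Finset.prod_ne_zero_iff.mpr fun r hr ↦ sub_ne_zero.mpr (Finset.mem_offDiag.mp hr).2.2
  have hdvd : ∀ᶠ y in cofinite ⊓ 𝓟 {y : ℤ | IsPowerful (∏ q ∈ Q, (y + q))},
      radical (∏ q ∈ T, (y + q)) ^ 2 ∣
        (∏ r ∈ Q.offDiag, (r.1 - r.2)) ^ 2 * ∏ q ∈ T, (y + q) :=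
    eventually_inf_principal.mpr <| .of_forall fun y hy ↦ hy.radical_prod_sq_dvd hT
  have hrad := isBigO_intCast_of_dvd hdvd <|
    ((eventually_prod_add_ne_zero T).filter_mono inf_le_left).mono fun y hy ↦ mul_ne_zero hD hy
  simp only [Int.cast_mul, Int.cast_pow] at hrad
  exact (hrad.trans (isBigO_const_mul_self _ _ _)).trans
    ((isEquivalent_intCast_prod_add_const T).isBigO.mono inf_le_left)

namespace ABCConjecture

variable {s : ℝ}

theorem exists_rpow_le_radical_nat (abc : ABCConjecture) (hs₀ : 0 < s) (hs₁ : s < 1) :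
    ∃ K : ℝ, 0 ≤ K ∧ ∀ a b c : ℕ, 0 < a → 0 < b → a.Coprime b → a + b = c →
      (c : ℝ) ^ s ≤ K * (radical (a * b * c) : ℕ) := by
  obtain ⟨C, hC⟩ := abc (s⁻¹ - 1) (sub_pos.mpr ((one_lt_inv₀ hs₀).mpr hs₁))
  refine ⟨|C| ^ s, by positivity, fun a b c ha hb hab hc ↦ ?_⟩
  have habc := hC a b c ha hb (by omega) hab hc
  rw [← Nat.radical_eq_prod_primeFactors, add_sub_cancel] at habc
  calc (c : ℝ) ^ s ≤ (|C| * (radical (a * b * c) : ℕ) ^ s⁻¹) ^ s := by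
        gcongr
        exact habc.trans (by gcongr; exact le_abs_self C)
    _ = |C| ^ s * (radical (a * b * c) : ℕ) := by
        rw [Real.mul_rpow (by positivity) (by positivity),
          Real.rpow_inv_rpow (by positivity) hs₀.ne']

theorem exists_abs_rpow_le_radical (abc : ABCConjecture) (hs₀ : 0 < s) (hs₁ : s < 1) :
    ∃ K : ℝ, 0 ≤ K ∧ ∀ x y : ℤ, x ≠ 0 → y ≠ 0 → x ≠ y → IsCoprime x y →
      |(x : ℝ)| ^ s ≤ K * (radical (x * y * (x - y)) : ℤ) := by
  obtain ⟨K, hK₀, hK⟩ := abc.exists_rpow_le_radical_nat hs₀ hs₁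
  refine ⟨K, hK₀, fun x y hx hy hxy hcop ↦ ?_⟩
  have of_add_eq {a b c : ℕ} (ha : a ≠ 0) (hb : b ≠ 0) (hab : a.Coprime b) (hc : a + b = c)
      (hprod : a * b * c = (x * y * (x - y)).natAbs) (hle : x.natAbs ≤ c) :
      |(x : ℝ)| ^ s ≤ K * (radical (x * y * (x - y)) : ℤ) := by
    have hmain := hK a b c ha.bot_lt hb.bot_lt hab hc
    rw [hprod] at hmain
    rw [← Int.radical_natAbs_eq_radical, ← Int.cast_abs, ← Nat.cast_natAbs]
    refine le_trans ?_ hmain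
    gcongr
  have hcop : x.natAbs.Coprime y.natAbs := Int.isCoprime_iff_gcd_eq_one.mp hcop
  have hcases : x.natAbs + y.natAbs = (x - y).natAbs ∨ (x - y).natAbs + y.natAbs = x.natAbs ∨
      x.natAbs + (x - y).natAbs = y.natAbs := by omega
  rcases hcases with h | h | h
  · exact of_add_eq (by omega) (by omega) hcop h (by simp only [Int.natAbs_mul]) (by omega)
  · refine of_add_eq (by omega) (by omega) ?_ h (by simp only [Int.natAbs_mul]; ring) le_rfl
    rwa [← h, Nat.coprime_add_self_left] at hcop
  · refine of_add_eq (by omega) (by omega) ?_ h (by simp only [Int.natAbs_mul]; ring) (by omega)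
    rwa [← h, Nat.coprime_self_add_right] at hcop

theorem isBigO_rpow_radical_mul_sub (abc : ABCConjecture) (hs₀ : 0 < s) (hs₁ : s < 1) {c : ℤ}
    (hc : c ≠ 0) :
    (fun n : ℤ ↦ |(n : ℝ)| ^ s) =O[cofinite] fun n ↦ ((radical (n * (n - c)) : ℤ) : ℝ) := by
  obtain ⟨K, hK₀, hK⟩ := abc.exists_abs_rpow_le_radical hs₀ hs₁
  refine .of_bound (|(c : ℝ)| ^ s * K * |(c : ℝ)|) ?_
  filter_upwards [eventually_cofinite_ne 0, eventually_cofinite_ne c] with n hn₀ hnc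
  obtain ⟨x, y, hx, hy, hgcd⟩ := extract_gcd n c
  set G := gcd n c
  have hG : G ≠ 0 := left_ne_zero_of_mul (hy ▸ hc)
  have hx₀ : x ≠ 0 := right_ne_zero_of_mul (hx ▸ hn₀)
  have hy₀ : y ≠ 0 := right_ne_zero_of_mul (hy ▸ hc)
  have hxy : x ≠ y := fun h ↦ hnc (by rw [hx, hy, h])
  have hGc : |(G : ℝ)| ≤ |(c : ℝ)| := by
    exact_mod_cast Int.le_of_dvd (abs_pos.mpr hc) ((abs_dvd_abs _ _).mpr (Dvd.intro y hy.symm))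
  have hdvd : x * y * (x - y) ∣ n * (n - c) * c :=
    ⟨G ^ 3, by rw [hx, hy]; ring⟩
  have hrad : ((radical (x * y * (x - y)) : ℤ) : ℝ) ≤
      (radical (n * (n - c)) : ℤ) * |(c : ℝ)| := by
    have hne : n * (n - c) ≠ 0 := mul_ne_zero hn₀ (sub_ne_zero.mpr hnc)
    refine le_trans ?_ (cast_radical_mul_le hne (pow_one (n * (n - c))).symm.dvd hc)
    exact_mod_cast Int.le_of_dvd (Int.radical_pos _)
      (radical_dvd_radical hdvd (mul_ne_zero hne hc))
  have hrad₀ : (0 : ℝ) ≤ (radical (n * (n - c)) : ℤ) := by exact_mod_cast (Int.radical_pos _).le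
  rw [Real.norm_of_nonneg (by positivity), Real.norm_of_nonneg hrad₀]
  calc |(n : ℝ)| ^ s = |(G : ℝ)| ^ s * |(x : ℝ)| ^ s := by
        rw [← Real.mul_rpow (abs_nonneg _) (abs_nonneg _), ← abs_mul, ← Int.cast_mul, ← hx]
    _ ≤ |(c : ℝ)| ^ s * (K * ((radical (n * (n - c)) : ℤ) * |(c : ℝ)|)) := by
        gcongr
        exact (hK x y hx₀ hy₀ hxy (gcd_isUnit_iff x y |>.mp hgcd)).trans (by gcongr)
    _ = _ := by ring

theorem isBigO_rpow_mul_sq_radical_mul_sub (abc : ABCConjecture) (hs₀ : 0 < s) (hs₁ : s < 1)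
    {α : Type*} {l : Filter α} {k : ℕ} {c : ℤ} {F P w : α → ℤ} (hc : c ≠ 0)
    (hF : Tendsto F l cofinite) (hP : ∀ᶠ x in l, P x ≠ 0)
    (hsq : ∀ x, w x ^ 2 ∣ F x - c) (hFP : ∀ x, F x * w x ∣ P x ^ k) :
    (fun x ↦ |(F x : ℝ)| ^ s * (w x : ℝ) ^ 2) =O[l]
      fun x ↦ ((radical (P x) : ℤ) : ℝ) * ((F x - c : ℤ) : ℝ) := by
  refine (((abc.isBigO_rpow_radical_mul_sub hs₀ hs₁ hc).comp_tendsto hF).mul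
    (isBigO_refl (fun x ↦ (w x : ℝ) ^ 2) l)).trans (.of_bound' ?_)
  filter_upwards [hP, hF.eventually (eventually_cofinite_ne c)] with x hPx hFx
  have hrad₀ (n : ℤ) : (0 : ℝ) ≤ (radical n : ℤ) := by exact_mod_cast (Int.radical_pos n).le
  simpa only [Function.comp_apply, norm_mul, norm_pow, Real.norm_eq_abs, sq_abs,
    abs_of_nonneg (hrad₀ _)] using
    cast_radical_mul_mul_sq_le hPx (sub_ne_zero.mpr hFx) (hsq x) (hFP x)

theorem isBigO_rpow_radical_of_sq_dvd_sub (abc : ABCConjecture) {t : ℝ} (ht₀ : 0 < t) (ht₂ : t < 2)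
    {d k : ℕ} (hd : 2 ≤ d) {F P : ℤ → ℤ} {c q : ℤ} (hc : c ≠ 0)
    (hF : (fun y ↦ (F y : ℝ)) =Θ[cofinite] fun y : ℤ ↦ (y : ℝ) ^ d)
    (hP : ∀ᶠ y in cofinite, P y ≠ 0) (hsq : ∀ y, (y + q) ^ 2 ∣ F y - c)
    (hFP : ∀ y, F y * (y + q) ∣ P y ^ k) :
    (fun y : ℤ ↦ |(y : ℝ)| ^ t) =O[cofinite] fun y ↦ ((radical (P y) : ℤ) : ℝ) := by
  have hd' : (2 : ℝ) ≤ d := by exact_mod_cast hd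
  -- `s` solves `d * s + 2 = t + d`, the balance of exponents in `hmul`.
  set s : ℝ := (t + d - 2) / d with hs
  have hs₀ : 0 < s := div_pos (by linarith) (by linarith)
  have hs₁ : s < 1 := (div_lt_one (by linarith)).mpr (by linarith)
  have hF_rpow : (fun y : ℤ ↦ |(y : ℝ)| ^ (t + d - 2)) =O[cofinite] fun y ↦ |(F y : ℝ)| ^ s := by
    refine (hF.isBigO_symm.abs_abs.rpow hs₀.le (.of_forall fun _ ↦ abs_nonneg _)).congr_left
      fun y ↦ ?_
    rw [abs_pow, ← Real.rpow_natCast_mul (abs_nonneg _), hs, mul_div_cancel₀ _ (by positivity)]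
  have hF_atTop := tendsto_norm_atTop_of_isTheta_pow (by omega)
    tendsto_norm_intCast_cofinite_atTop hF
  have hsub : (fun y ↦ ((F y - c : ℤ) : ℝ)) =O[cofinite] fun y : ℤ ↦ (y : ℝ) ^ d := by
    simpa only [Int.cast_sub] using
      hF.isBigO.sub ((isLittleO_const_left.mpr (.inr hF_atTop)).isBigO.trans hF.isBigO)
  have hmul : (fun y : ℤ ↦ |(y : ℝ)| ^ (t + d - 2) * (y : ℝ) ^ 2) =O[cofinite]
      fun y ↦ ((radical (P y) : ℤ) : ℝ) * (y : ℝ) ^ d :=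
    (hF_rpow.mul ((isEquivalent_intCast_add_const q).symm.isBigO.pow 2)).trans <|
      (abc.isBigO_rpow_mul_sq_radical_mul_sub hs₀ hs₁ hc
        (tendsto_cofinite_of_tendsto_norm_intCast hF_atTop) hP hsq hFP).trans <|
      (isBigO_refl _ _).mul hsub
  have hdiv := (hmul.mul (isBigO_refl (fun y : ℤ ↦ ((y : ℝ) ^ d)⁻¹) cofinite)).norm_left
  refine hdiv.congr' ?_ ?_ <;> filter_upwards [eventually_cofinite_ne (0 : ℤ)] with y hy
  · have hy' : 0 < |(y : ℝ)| := by positivity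
    rw [norm_mul, norm_mul, norm_inv, norm_pow, norm_pow, Real.norm_of_nonneg (by positivity),
      Real.norm_eq_abs, ← Real.rpow_add_natCast hy'.ne', ← div_eq_mul_inv,
      ← Real.rpow_sub_natCast hy'.ne']
    congr 1
    push_cast
    ring
  · exact mul_inv_cancel_right₀ (by positivity) _

theorem isBigO_rpow_radical_prod_add (abc : ABCConjecture) {t : ℝ} (ht₀ : 0 < t) (ht₂ : t < 2)
    {Q : Finset ℤ} (hQ : 2 < Q.card) :
    (fun y : ℤ ↦ |(y : ℝ)| ^ t) =O[cofinite]
      fun y ↦ ((radical (∏ q ∈ Q, (y + q)) : ℤ) : ℝ) := by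
  obtain ⟨q₁, hq₁, q₂, hq₂, q₃, hq₃, h₁₂, h₂₃⟩ := exists_lt_lt_of_two_lt_card hQ
  obtain ⟨a, ha⟩ := Int.le.dest h₁₂.le
  obtain ⟨b, hb⟩ := Int.le.dest h₂₃.le
  have ha₀ : a ≠ 0 := by omega
  have hb₀ : b ≠ 0 := by omega
  have hc : (-a : ℤ) ^ a * b ^ b ≠ 0 := mul_ne_zero (pow_ne_zero a (by omega)) (by positivity)
  have hF : (fun y : ℤ ↦ (((y + q₁) ^ a * (y + q₃) ^ b : ℤ) : ℝ)) ~[cofinite]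
      fun y ↦ (y : ℝ) ^ (a + b) := by
    simpa only [Int.cast_mul, Int.cast_pow, pow_add] using!
      ((isEquivalent_intCast_add_const q₁).pow a).mul ((isEquivalent_intCast_add_const q₃).pow b)
  have hsq (y : ℤ) :
      (y + q₂) ^ 2 ∣ (y + q₁) ^ a * (y + q₃) ^ b - (-a : ℤ) ^ a * b ^ b := by
    have h₁ : y + q₂ - a = y + q₁ := by omega
    have h₃ : y + q₂ + b = y + q₃ := by omega
    simpa only [h₁, h₃] using sq_dvd_sub_pow_mul_add_pow_sub ha₀ hb₀ (y + q₂)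
  have hdvd (y : ℤ) :
      (y + q₁) ^ a * (y + q₃) ^ b * (y + q₂) ∣ (∏ q ∈ Q, (y + q)) ^ (a + b + 1) := by
    rw [pow_succ, pow_add]
    have dvd_prod {q} (hq : q ∈ Q) : y + q ∣ ∏ q ∈ Q, (y + q) := Finset.dvd_prod_of_mem (y + ·) hq
    exact mul_dvd_mul (mul_dvd_mul (pow_dvd_pow_of_dvd (dvd_prod hq₁) a)
      (pow_dvd_pow_of_dvd (dvd_prod hq₃) b)) (dvd_prod hq₂)
  exact abc.isBigO_rpow_radical_of_sq_dvd_sub ht₀ ht₂ (by omega) hc hF.isTheta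
    (eventually_prod_add_ne_zero Q) hsq hdvd

theorem finite_setOf_isPowerful_prod_add (abc : ABCConjecture) {Q : Finset ℤ} (hQ : 2 < Q.card) :
    {y : ℤ | IsPowerful (∏ q ∈ Q, (y + q))}.Finite := by
  obtain ⟨T, hTQ, hT⟩ := Finset.exists_subset_card_eq (show 3 ≤ Q.card from hQ)
  by_contra hinf
  have hne := Set.Infinite.cofinite_inf_principal_neBot hinf
  have hupper := isBigO_radical_prod_add_sq_of_isPowerful hTQ
  set l := cofinite ⊓ 𝓟 {y : ℤ | IsPowerful (∏ q ∈ Q, (y + q))}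
  have hl : l ≤ cofinite := inf_le_left
  have hlower := (abc.isBigO_rpow_radical_prod_add (Q := T) (t := 7 / 4) (by norm_num) (by norm_num)
    (by omega)).mono hl
  have hbound : (fun y : ℤ ↦ ‖(y : ℝ)‖ ^ 7) =O[l] fun y ↦ ‖(y : ℝ)‖ ^ 6 := calc
    (fun y : ℤ ↦ ‖(y : ℝ)‖ ^ 7) = fun y : ℤ ↦ (|(y : ℝ)| ^ (7 / 4 : ℝ)) ^ 4 := by
      ext y
      rw [← Real.rpow_mul_natCast (abs_nonneg _), Real.norm_eq_abs, ← Real.rpow_natCast]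
      norm_num
    _ =O[l] fun y ↦ ((radical (∏ q ∈ T, (y + q)) : ℤ) : ℝ) ^ 4 := hlower.pow 4
    _ = fun y ↦ (((radical (∏ q ∈ T, (y + q)) : ℤ) : ℝ) ^ 2) ^ 2 := by simp only [← pow_mul]
    _ =O[l] fun y : ℤ ↦ ((y : ℝ) ^ 3) ^ 2 := hT ▸ hupper.pow 2
    _ =O[l] fun y : ℤ ↦ ‖(y : ℝ)‖ ^ 6 :=
      isBigO_of_le l fun y ↦ by simp only [norm_pow, norm_norm, ← pow_mul, Nat.reduceMul, le_refl]
  have hlittle : (fun y : ℤ ↦ ‖(y : ℝ)‖ ^ 6) =o[l] fun y ↦ ‖(y : ℝ)‖ ^ 7 :=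
    (isLittleO_pow_pow_atTop_of_lt (by norm_num)).comp_tendsto
      (tendsto_norm_intCast_cofinite_atTop.mono_left hl)
  refine hlittle.not_isBigO ?_ hbound
  refine ((eventually_cofinite_ne (0 : ℤ)).filter_mono hl).frequently.mono fun y hy ↦ ?_
  exact pow_ne_zero 6 (norm_ne_zero_iff.mpr (Int.cast_ne_zero.mpr hy))

end ABCConjecture

theorem stmt7 (abc : ABCConjecture)
    (m : ℕ) (hm : 2 < m) (q : Fin m → ℤ) (hq : Function.Injective q)
    (k : ℕ) (fi : Fin k → Polynomial ℤ) (l : Fin k → ℕ) (hl : ∀ i, 2 ≤ l i)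
    (f : Polynomial ℤ) (hf : f = ∏ i, fi i ^ l i) (hnc : 0 < f.natDegree) :
    {p : ℤ × ℤ | (∏ i, (p.2 + q i)) = f.eval p.1}.Finite := by
  have hpow (x : ℤ) : IsPowerful (f.eval x) := by
    simp only [hf, eval_prod, eval_pow]
    exact .prod fun i _ ↦ .pow _ (hl i)
  refine .of_finite_fibers Prod.snd ?_ fun y _ ↦ ?_
  · have hfin := abc.finite_setOf_isPowerful_prod_add (Q := Finset.univ.map ⟨q, hq⟩)
      (by rwa [Finset.card_map, Finset.card_fin])
    refine hfin.subset ?_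
    rintro _ ⟨⟨x, y⟩, hxy : ∏ i, (y + q i) = f.eval x, rfl⟩
    simpa only [Set.mem_ofPred_eq, Finset.prod_map, Function.Embedding.coeFn_mk, hxy] using hpow x
  · refine ((finite_setOf_eval_eq hnc (∏ i, (y + q i))).image (·, y)).subset ?_
    rintro ⟨x, _⟩ ⟨hxy, rfl⟩
    exact ⟨x, hxy.symm, rfl⟩
end

section
/- Let f(x) = a_0 + a_1 x + ··· + a_m x^m and g(x) = b_0 + b_1 x + ··· + b_m x^m be polynomials in ℤ[x] with deg f = deg g = m ≥ 2, and suppose a_{m−1} − b_{m−1} is not divisible by m·b_m. Then the equation g(y) = f(x) has finitely many integer solutions if and only if |x − y| is bounded over all integer solutions (x, y). -/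
/-!
A solution with `y - x = d` makes `x` a root of `g(X + d) - f(X)`. Unless `f` is a translate of `g`,
this polynomial is nonzero, so each difference `d` occurs for finitely many solutions; hence the
solutions are finite in number as soon as their differences are. Comparing the coefficients of
`X ^ (m - 1)` in `f(X) = g(X + d)` gives `a_{m-1} = b_{m-1} + m * b_m * d`, so the divisibility
hypothesis excludes translates.
-/

open Polynomial

theorem coeff_taylor_of_natDegree_le_succ {R : Type*} [CommSemiring R] {p : R[X]} {n : ℕ}
    (hp : p.natDegree ≤ n + 1) (r : R) :
    (taylor r p).coeff n = p.coeff n + ((n + 1 : ℕ) : R) * p.coeff (n + 1) * r := by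
  have hdeg : (hasseDeriv n p).natDegree < 2 := by
    have := natDegree_hasseDeriv_le p n
    lia
  rw [taylor_coeff, eval_eq_sum_range' hdeg]
  simp [Finset.sum_range_succ, hasseDeriv_coeff, add_comm 1 n]

theorem taylor_ne_of_not_dvd_coeff_sub {R : Type*} [CommRing R] {f g : R[X]} {n : ℕ}
    (hg : g.natDegree ≤ n + 1)
    (hdvd : ¬ ((n + 1 : ℕ) : R) * g.coeff (n + 1) ∣ f.coeff n - g.coeff n) (d : R) :
    taylor d g ≠ f := by
  rintro rfl
  exact hdvd ⟨d, by rw [coeff_taylor_of_natDegree_le_succ hg, add_sub_cancel_left]⟩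

theorem finite_setOf_eval_add_eq_eval {R : Type*} [CommRing R] [IsDomain R] {f g : R[X]} {d : R}
    (hfg : taylor d g ≠ f) : {x | g.eval (x + d) = f.eval x}.Finite := by
  simpa only [IsRoot.def, eval_sub, taylor_eval, sub_eq_zero] using
    finite_setOfPred_isRoot (sub_ne_zero.mpr hfg)

theorem finite_iff_exists_forall_abs_le {α : Type*} [AddCommGroup α] [LinearOrder α]
    [IsOrderedAddMonoid α] [LocallyFiniteOrder α] {s : Set α} :
    s.Finite ↔ ∃ B, ∀ a ∈ s, |a| ≤ B := by
  constructor
  · intro hs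
    obtain ⟨B, hB⟩ := (hs.image abs).bddAbove
    exact ⟨B, fun a ha => hB (Set.mem_image_of_mem abs ha)⟩
  · rintro ⟨B, hB⟩
    exact (Set.finite_Icc (-B) B).subset fun a ha => abs_le.mp (hB a ha)

theorem stmt11_general {R : Type*} [CommRing R] [IsDomain R] {f g : R[X]}
    (hfg : ∀ d, taylor d g ≠ f) :
    {p : R × R | g.eval p.2 = f.eval p.1}.Finite ↔
      ((fun p : R × R => p.2 - p.1) '' {p | g.eval p.2 = f.eval p.1}).Finite := by
  refine ⟨fun h => h.image _, fun h => h.of_finite_fibers _ fun d _ => ?_⟩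
  refine ((finite_setOf_eval_add_eq_eval (hfg d)).image fun x => (x, x + d)).subset ?_
  rintro ⟨x, y⟩ ⟨hxy, rfl : y - x = d⟩
  have hy : x + (y - x) = y := add_sub_cancel x y
  exact ⟨x, (congrArg g.eval hy).trans hxy, congrArg (Prod.mk x) hy⟩

theorem stmt11 (m : ℕ) (hm : 2 ≤ m)
    (f g : Polynomial ℤ) (hf : f.natDegree = m) (hg : g.natDegree = m)
    (hdiv : ¬ ((m : ℤ) * g.coeff m ∣ f.coeff (m - 1) - g.coeff (m - 1))) :
    {p : ℤ × ℤ | g.eval p.2 = f.eval p.1}.Finite ↔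
      ∃ B : ℤ, ∀ x y : ℤ, g.eval y = f.eval x → |x - y| ≤ B := by
  obtain ⟨n, rfl⟩ := Nat.exists_eq_add_of_le' (one_le_two.trans hm)
  rw [stmt11_general (taylor_ne_of_not_dvd_coeff_sub hg.le hdiv), finite_iff_exists_forall_abs_le]
  simp only [Set.forall_mem_image, Prod.forall, Set.mem_ofPred_eq, abs_sub_comm]
end

section
/- Let f(x) be a monic polynomial of degree n with positive integer coefficients. If there are infinitely many complete composites of f(x), then f(x) has a factor x + c in ℤ[x] with c a positive integer. -/
open Polynomial

/-- For a polynomial `f` of degree `m`, a positive integer `k` is a *complete composite*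
of `f` if `k = f(n)` for some positive integer `n`, and `k = ∏ i, (n + a i)` for some
positive integers `a 1, ..., a m`. -/
def CompleteComposite (f : Polynomial ℤ) (k : ℤ) : Prop :=
  0 < k ∧ ∃ n : ℤ, 0 < n ∧ f.eval n = k ∧
    ∃ a : Fin f.natDegree → ℤ, (∀ i, 0 < a i) ∧ k = ∏ i, (n + a i)

/-!
Comparing `f n = ∏ i, (n + a i)` with `f n ≤ n ^ m + S * n ^ (m - 1)`, where `S` is the sum of the
absolute values of the non-leading coefficients of the monic polynomial `f` of degree `m`, bounds
every shift `a i` by `S`, independently of `n`. So only finitely many polynomials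
`∏ i, (X + a i)` occur, and if there are infinitely many complete composites, then one of these
polynomials agrees with `f` at infinitely many points and hence equals `f`.
-/

section EvalFiber

variable {R : Type*}

theorem natDegree_pos_of_infinite_range_eval [Semiring R] {f : R[X]}
    (h : (Set.range fun x => f.eval x).Infinite) : 0 < f.natDegree := by
  by_contra! hdeg
  rw [eq_C_of_natDegree_le_zero hdeg] at h
  simp only [eval_C] at h
  exact h Set.finite_range_const

theorem mem_of_infinite_setOf_exists_eval_eq [CommRing R] [IsDomain R] {f : R[X]} {T : Set R[X]}
    (hT : T.Finite) (h : {x | ∃ g ∈ T, f.eval x = g.eval x}.Infinite) : f ∈ T := by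
  by_contra hf
  have hcover : {x | ∃ g ∈ T, f.eval x = g.eval x} = ⋃ g ∈ T, {x | f.eval x = g.eval x} := by
    ext x
    simp
  rw [hcover] at h
  refine h (hT.biUnion fun g hg => ?_)
  by_contra hfg
  exact hf (eq_of_infinite_eval_eq f g hfg ▸ hg)

end EvalFiber

section ShiftBound

theorem add_mul_pow_le_prod_add {ι R : Type*} [Fintype ι] [CommSemiring R] [PartialOrder R]
    [IsOrderedRing R] {x : R} (hx : 0 ≤ x) {a : ι → R} (ha : ∀ i, 0 ≤ a i) (i : ι) :
    (x + a i) * x ^ (Fintype.card ι - 1) ≤ ∏ j, (x + a j) := by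
  classical
  rw [← Finset.mul_prod_erase Finset.univ (fun j => x + a j) (Finset.mem_univ i),
    ← Finset.card_univ, ← Finset.card_erase_of_mem (Finset.mem_univ i), ← Finset.prod_const]
  exact mul_le_mul_of_nonneg_left
    (Finset.prod_le_prod (fun _ _ => hx) fun j _ => le_add_of_nonneg_right (ha j))
    (add_nonneg hx (ha i))

variable {R : Type*} [CommRing R] [LinearOrder R] {f : R[X]} {x : R}

theorem eval_le_pow_natDegree_add_sum_abs_coeff_mul_pow [IsOrderedRing R]
    (hf : f.Monic) (hx : 1 ≤ x) :
    f.eval x ≤ x ^ f.natDegree +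
      (∑ i ∈ Finset.range f.natDegree, |f.coeff i|) * x ^ (f.natDegree - 1) := by
  rw [eval_eq_sum_range, Finset.sum_range_succ, hf.coeff_natDegree, one_mul, add_comm,
    Finset.sum_mul]
  refine add_le_add le_rfl (Finset.sum_le_sum fun i hi => ?_)
  have hpow : x ^ i ≤ x ^ (f.natDegree - 1) :=
    pow_le_pow_right₀ hx (Nat.le_sub_one_of_lt (Finset.mem_range.mp hi))
  exact mul_le_mul (le_abs_self _) hpow (pow_nonneg (zero_le_one.trans hx) i) (abs_nonneg _)

theorem le_sum_abs_coeff_of_eval_eq_prod_add [IsStrictOrderedRing R] {ι : Type*} [Fintype ι]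
    (hf : f.Monic) (hcard : Fintype.card ι = f.natDegree) (hx : 1 ≤ x) {a : ι → R}
    (ha : ∀ i, 0 ≤ a i) (h : f.eval x = ∏ i, (x + a i)) (i : ι) :
    a i ≤ ∑ j ∈ Finset.range f.natDegree, |f.coeff j| := by
  have hx0 : 0 < x := zero_lt_one.trans_le hx
  have hdeg : f.natDegree ≠ 0 := hcard ▸ (Fintype.card_pos_iff.mpr ⟨i⟩).ne'
  refine le_of_add_le_add_left (a := x) (le_of_mul_le_mul_right ?_ (pow_pos hx0 (f.natDegree - 1)))
  calc (x + a i) * x ^ (f.natDegree - 1)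
      ≤ ∏ j, (x + a j) := hcard ▸ add_mul_pow_le_prod_add hx0.le ha i
    _ = f.eval x := h.symm
    _ ≤ x ^ f.natDegree +
          (∑ j ∈ Finset.range f.natDegree, |f.coeff j|) * x ^ (f.natDegree - 1) :=
        eval_le_pow_natDegree_add_sum_abs_coeff_mul_pow hf hx
    _ = (x + ∑ j ∈ Finset.range f.natDegree, |f.coeff j|) * x ^ (f.natDegree - 1) := by
        rw [add_mul, mul_pow_sub_one hdeg]

end ShiftBound

theorem stmt12_general {f : ℤ[X]} (hf : f.Monic)
    (hinf : {k : ℤ | CompleteComposite f k}.Infinite) :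
    0 < f.natDegree ∧
      ∃ a : Fin f.natDegree → ℤ, (∀ i, 0 < a i) ∧ ∏ i, (X + C (a i)) = f := by
  let S := ∑ i ∈ Finset.range f.natDegree, |f.coeff i|
  let box : Set (Fin f.natDegree → ℤ) := Set.univ.pi fun _ => Set.Ioc 0 S
  let products : Set ℤ[X] := (fun a => ∏ i, (X + C (a i))) '' box
  have hproducts : products.Finite := (Set.Finite.pi fun _ => Set.finite_Ioc 0 S).image _
  have hvalues : {k | CompleteComposite f k} ⊆
      (fun x => f.eval x) '' {x | ∃ g ∈ products, f.eval x = g.eval x} := by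
    rintro k ⟨-, n, hn, hk, a, ha, hprod⟩
    have hbox : a ∈ box := fun i _ => ⟨ha i, le_sum_abs_coeff_of_eval_eq_prod_add hf
      (Fintype.card_fin _) hn (fun j => (ha j).le) (hk.trans hprod) i⟩
    refine ⟨n, ⟨_, ⟨a, hbox, rfl⟩, ?_⟩, hk⟩
    simp only [hk, hprod, eval_prod, eval_add, eval_X, eval_C]
  have hinf_values := hinf.mono hvalues
  obtain ⟨a, ha, hprod⟩ := mem_of_infinite_setOf_exists_eval_eq hproducts (hinf_values.of_image _)
  exact ⟨natDegree_pos_of_infinite_range_eval (hinf_values.mono (Set.image_subset_range _ _)),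
    a, fun i => (ha i trivial).1, hprod⟩

theorem stmt12 (n : ℕ) (f : Polynomial ℤ) (hf : f.Monic) (hdeg : f.natDegree = n)
    (hpos : ∀ i ≤ f.natDegree, 0 < f.coeff i)
    (hinf : {k : ℤ | CompleteComposite f k}.Infinite) :
    ∃ c : ℤ, 0 < c ∧ (X + C c) ∣ f := by
  obtain ⟨hd, a, ha, hprod⟩ := stmt12_general hf hinf
  exact ⟨a ⟨0, hd⟩, ha _,
    (Finset.dvd_prod_of_mem (fun i => X + C (a i)) (Finset.mem_univ _)).trans hprod.dvd⟩
end

section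
/- Let f(x) be a monic polynomial of degree m with positive integer coefficients such that not all complex roots of f are integers (equivalently, f is not a product of m monic linear polynomials with integer coefficients), and let q_1, q_2, ..., q_m be positive integers. Then the equation (y + q_1)(y + q_2)···(y + q_m) = f(x) has only finitely many solutions (x, y) with x and y positive integers. -/
open Polynomial

/-!
If `f` and `g` are monic integer polynomials of the same degree `m`, then `|f x|` and `|g y|` differ
from `|x| ^ m` and `|y| ^ m` only by terms of lower order, so `f x = g y` forces `|y|` to stay
within a fixed distance of `|x|`. Every solution therefore lies on one of finitely many lines
`y = ± x + d`, and such a line carries infinitely many solutions only if `f = g (± X + d)`. This is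
impossible when `g` is a product of linear factors and `f` is not.
-/

section OrderedRing

variable {R : Type*} [CommRing R] [LinearOrder R]

/-- The sum of the absolute values of the non-leading coefficients of `f`; for monic `f` it
measures how far `f` is from a power of `X`. -/
def lowerCoeffNorm (f : R[X]) : R :=
  ∑ i ∈ Finset.range f.natDegree, |f.coeff i|

variable [IsStrictOrderedRing R]

lemma lowerCoeffNorm_nonneg (f : R[X]) : 0 ≤ lowerCoeffNorm f :=
  Finset.sum_nonneg fun _ _ => abs_nonneg _

lemma abs_eval_sub_pow_natDegree_le {f : R[X]} (hf : f.Monic) (x : R) :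
    |f.eval x - x ^ f.natDegree| ≤
      lowerCoeffNorm f * ∑ i ∈ Finset.range f.natDegree, |x| ^ i := by
  have lower_terms : f.eval x - x ^ f.natDegree =
      ∑ i ∈ Finset.range f.natDegree, f.coeff i * x ^ i := by
    rw [eval_eq_sum_range, Finset.sum_range_succ, hf.coeff_natDegree, one_mul, add_sub_cancel_right]
  calc |f.eval x - x ^ f.natDegree|
      ≤ ∑ i ∈ Finset.range f.natDegree, |f.coeff i| * |x| ^ i := by
        rw [lower_terms]
        exact (Finset.abs_sum_le_sum_abs _ _).trans_eq (by simp only [abs_mul, abs_pow])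
    _ ≤ lowerCoeffNorm f * ∑ i ∈ Finset.range f.natDegree, |x| ^ i := by
        rw [Finset.mul_sum]
        gcongr with i hi
        exact Finset.single_le_sum (fun j _ => abs_nonneg (f.coeff j)) hi

lemma abs_eval_le_pow_natDegree_add {f : R[X]} (hf : f.Monic) (x : R) :
    |f.eval x| ≤
      |x| ^ f.natDegree + lowerCoeffNorm f * ∑ i ∈ Finset.range f.natDegree, |x| ^ i := by
  have := abs_sub_abs_le_abs_sub (f.eval x) (x ^ f.natDegree)
  rw [abs_pow] at this
  linarith [abs_eval_sub_pow_natDegree_le hf x]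

lemma pow_natDegree_sub_le_abs_eval {f : R[X]} (hf : f.Monic) (x : R) :
    |x| ^ f.natDegree - lowerCoeffNorm f * ∑ i ∈ Finset.range f.natDegree, |x| ^ i ≤
      |f.eval x| := by
  have := abs_sub_abs_le_abs_sub (x ^ f.natDegree) (f.eval x)
  rw [abs_sub_comm, abs_pow] at this
  linarith [abs_eval_sub_pow_natDegree_le hf x]

lemma sub_mul_geom_sum_le_pow_sub_pow {a b : R} (ha : 1 ≤ a) (hab : a ≤ b) (n : ℕ) :
    (b - a) * ∑ i ∈ Finset.range n, b ^ i ≤ b ^ n - a ^ n := by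
  have hb : 0 ≤ b := by linarith
  rw [← (Commute.all b a).mul_geom_sum₂ n]
  refine mul_le_mul_of_nonneg_left (Finset.sum_le_sum fun i _ => ?_) (sub_nonneg.mpr hab)
  exact le_mul_of_one_le_right (pow_nonneg hb i) (one_le_pow₀ ha)

lemma abs_le_max_abs_one_add_of_eval_eq {f g : R[X]} (hf : f.Monic) (hg : g.Monic)
    (hdeg : f.natDegree = g.natDegree) (hg0 : g.natDegree ≠ 0) {x y : R}
    (hxy : f.eval x = g.eval y) :
    |y| ≤ max |x| 1 + (lowerCoeffNorm f + lowerCoeffNorm g) := by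
  by_contra! hlt
  set n := g.natDegree
  set a := max |x| 1
  set S := ∑ i ∈ Finset.range n, |y| ^ i
  have hab : a ≤ |y| := by linarith [lowerCoeffNorm_nonneg f, lowerCoeffNorm_nonneg g]
  have hxa : |x| ≤ a := le_max_left _ _
  have hS : 0 < S :=
    Finset.sum_pos (fun i _ => pow_pos (by linarith [le_max_right |x| 1]) i)
      (Finset.nonempty_range_iff.mpr hg0)
  have upper : |f.eval x| ≤ a ^ n + lowerCoeffNorm f * S := by
    have hf_nonneg := lowerCoeffNorm_nonneg f
    have hxy_abs : |x| ≤ |y| := hxa.trans hab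
    calc |f.eval x| ≤ |x| ^ n + lowerCoeffNorm f * ∑ i ∈ Finset.range n, |x| ^ i :=
          hdeg ▸ abs_eval_le_pow_natDegree_add hf x
      _ ≤ a ^ n + lowerCoeffNorm f * S := by
          unfold S
          gcongr ?_ ^ n + _ * ∑ i ∈ _, ?_ ^ i
  have lower : |y| ^ n - lowerCoeffNorm g * S ≤ |g.eval y| := pow_natDegree_sub_le_abs_eval hg y
  have gap : (|y| - a) * S ≤ |y| ^ n - a ^ n :=
    sub_mul_geom_sum_le_pow_sub_pow (le_max_right _ _) hab n
  have : (lowerCoeffNorm f + lowerCoeffNorm g) * S < (|y| - a) * S :=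
    mul_lt_mul_of_pos_right (by linarith) hS
  rw [hxy] at upper
  linarith

end OrderedRing

section IsDomain

variable {R : Type*} [CommRing R] [IsDomain R]

lemma finite_setOfPred_eval_eq_eval_of_ne_comp {f g l : R[X]} (h : f ≠ g.comp l) :
    {p : R × R | f.eval p.1 = g.eval p.2 ∧ p.2 = l.eval p.1}.Finite := by
  refine ((finite_setOfPred_isRoot (sub_ne_zero.mpr h)).image fun x => (x, l.eval x)).subset ?_
  rintro ⟨x, y⟩ ⟨hxy, hy : y = l.eval x⟩
  subst hy
  exact ⟨x, by simpa [sub_eq_zero] using hxy, rfl⟩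

lemma exists_eq_prod_X_add_C_of_splits {f : R[X]} (hf : f.Monic) (hs : f.Splits) :
    ∃ c : Fin f.natDegree → R, f = ∏ i, (X + C (c i)) := by
  set l := f.roots.toList with hl
  have hlen : l.length = f.natDegree := by
    rw [Multiset.length_toList, hs.natDegree_eq_card_roots]
  rw [← hlen]
  refine ⟨fun i => -l[i], ?_⟩
  calc f = (f.roots.map (X - C ·)).prod := hs.eq_prod_roots_of_monic hf
    _ = (l.map (X - C ·)).prod := by
        rw [← Multiset.prod_coe, ← Multiset.map_coe, hl, Multiset.coe_toList]
    _ = ∏ i : Fin l.length, (X + C (-l[i])) := by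
        simp [← Fin.prod_univ_fun_getElem, sub_eq_add_neg]

end IsDomain

lemma exists_units_abs_sub_smul_eq {G : Type*} [AddCommGroup G] [LinearOrder G]
    [IsOrderedAddMonoid G] (x y : G) : ∃ u : ℤˣ, |y - u • x| = |(|y| - |x|)| := by
  have same_sign : |y - (1 : ℤˣ) • x| = |y - x| := by rw [one_smul]
  have opposite_sign : |y - (-1 : ℤˣ) • x| = |y + x| := by simp [Units.smul_def]
  rcases abs_choice x with hx | hx <;> rcases abs_choice y with hy | hy <;> rw [hx, hy]
  · exact ⟨1, same_sign⟩
  · exact ⟨-1, by rw [opposite_sign, ← abs_neg, neg_add']⟩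
  · exact ⟨-1, by rw [opposite_sign, sub_neg_eq_add]⟩
  · exact ⟨1, by rw [same_sign, ← abs_neg, neg_sub_neg, neg_sub]⟩

theorem finite_setOfPred_eval_eq_eval {f g : ℤ[X]} (hf : f.Monic) (hg : g.Monic)
    (hdeg : f.natDegree = g.natDegree)
    (h : ∀ (u : ℤˣ) (d : ℤ), f ≠ g.comp (C (u : ℤ) * X + C d)) :
    {p : ℤ × ℤ | f.eval p.1 = g.eval p.2}.Finite := by
  have hg0 : g.natDegree ≠ 0 := by
    intro hg0
    rw [hg.natDegree_eq_zero.mp hg0, hf.natDegree_eq_zero.mp (hdeg.trans hg0)] at h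
    exact h 1 0 one_comp.symm
  set B := lowerCoeffNorm f + lowerCoeffNorm g + 1
  refine (Set.finite_iUnion fun u : ℤˣ => (Set.finite_Icc (-B) B).biUnion fun d _ =>
    finite_setOfPred_eval_eq_eval_of_ne_comp (h u d)).subset ?_
  rintro ⟨x, y⟩ (hxy : f.eval x = g.eval y)
  have hyx := abs_le_max_abs_one_add_of_eval_eq hf hg hdeg hg0 hxy
  have hxy' := abs_le_max_abs_one_add_of_eval_eq hg hf hdeg.symm (hdeg ▸ hg0) hxy.symm
  have max_abs_one_le (z : ℤ) : max |z| 1 ≤ |z| + 1 :=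
    max_le (by linarith) (by linarith [abs_nonneg z])
  have near_abs : |(|y| - |x|)| ≤ B :=
    abs_le.mpr ⟨by linarith [max_abs_one_le y], by linarith [max_abs_one_le x]⟩
  obtain ⟨u, hu⟩ := exists_units_abs_sub_smul_eq x y
  have near : |y - u * x| ≤ B := hu.trans_le near_abs
  simp only [Set.mem_iUnion]
  exact ⟨u, y - u * x, abs_le.mp near, hxy, by simp⟩

theorem stmt15_general (m : ℕ) (f : Polynomial ℤ) (hf : f.Monic) (hdeg : f.natDegree = m)
    (hroots : ¬ ∃ c : Fin m → ℤ, f = ∏ i, (X + C (c i))) (q : Fin m → ℤ) :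
    {p : ℤ × ℤ | (∏ i, (p.2 + q i)) = f.eval p.1}.Finite := by
  subst hdeg
  set g : ℤ[X] := ∏ i, (X + C (q i)) with hg_def
  have hg : g.Monic := monic_prod_of_monic _ _ fun i _ => monic_X_add_C (q i)
  have hg_splits : g.Splits := .prod fun i _ => .X_add_C (q i)
  have hdeg : f.natDegree = g.natDegree := by
    rw [hg_def, natDegree_prod_of_monic _ _ fun i _ => monic_X_add_C (q i)]
    simp only [natDegree_X_add_C, Finset.sum_const, Finset.card_fin, smul_eq_mul, mul_one]
  have hne (u : ℤˣ) (d : ℤ) : f ≠ g.comp (C (u : ℤ) * X + C d) := by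
    intro hcomp
    refine hroots (exists_eq_prod_X_add_C_of_splits hf (hcomp ▸ ?_))
    refine hg_splits.comp_of_natDegree_le_one_of_invertible natDegree_linear_le ?_
    rw [leadingCoeff_linear u.ne_zero]
    exact u.invertible
  refine (finite_setOfPred_eval_eq_eval hf hg hdeg hne).subset fun p hp => ?_
  simpa [hg_def, eval_prod] using hp.symm

theorem stmt15 (m : ℕ) (f : Polynomial ℤ) (hf : f.Monic) (hdeg : f.natDegree = m)
    (hpos : ∀ i ≤ f.natDegree, 0 < f.coeff i)
    (hroots : ¬ ∃ c : Fin m → ℤ, f = ∏ i, (X + C (c i)))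
    (q : Fin m → ℤ) (hq : ∀ i, 0 < q i) :
    {p : ℤ × ℤ | 0 < p.1 ∧ 0 < p.2 ∧ (∏ i, (p.2 + q i)) = f.eval p.1}.Finite :=
  (stmt15_general m f hf hdeg hroots q).subset fun _ hp => hp.2.2
end
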